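/- arXiv:2410.06148 — 2 statements merged into one kernel-verified Lean document; each statement's English description precedes it below -/
import Mathlib

section
/- Let n be an integer, let F be a forest on n vertices with maximum degree Δ, and let c : E(K_n) → {−1, +1} be a balanced colouring of the edges of the complete graph K_n. Then there exists a copy F' of F in K_n such that |c(F')| ≤ Δ/2 + 18. -/
/-!
Suppose that every copy of `F` has weight at least `Δ / 2 + 37 / 2` in absolute value, and fix a
vertex `l` of degree at most `1`. Call a vertex `r` sensitive if exchanging the images of `r` and
`l` changes the sign of the weight of some copy. The exchanges with `l` generate the symmetric
group, so the sign depends only on the images of the sensitive vertices.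

A sign change moves the weight by at least `Δ + 37`, so sensitive vertices have large degree and,
`F` being a forest, there are few of them. Let `u` be sensitive with at most two sensitive
neighbours, and fix the images of the other sensitive vertices. The sign then depends only on
which class of a partition `P ∪ M` contains the image of `u`. For `z ∈ P` and `z' ∈ M` the jump
must persist however the neighbours of `u` are embedded, so the colours at `z` and `z'` disagree
the same way almost everywhere, up to an error measured by `deg u`. Balancedness then forces
`deg u > n / 2`. A forest has no two such vertices, while every set of at least two vertices in a
forest contains two vertices with at most two neighbours in it. So at most one vertex is sensitive.

Hence the sign depends only on the image `x` of a single vertex `u`. The average weight over the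
copies sending `u` to `x` is proportional to the sum of the colours at `x`, so this sum is at least
`n / 2` in absolute value for every `x`, which is incompatible with balancedness.
-/

open Finset Equiv

section DoubleSums

variable {V R : Type*} [CommRing R] {B : V → V → R}

theorem sum_sum_comm_of_symm (hB : ∀ v w, B v w = B w v) (S T : Finset V) :
    ∑ v ∈ S, ∑ w ∈ T, B v w = ∑ v ∈ T, ∑ w ∈ S, B v w :=
  sum_comm.trans <| sum_congr rfl fun v _ ↦ sum_congr rfl fun w _ ↦ hB w v

variable [Fintype V] [DecidableEq V]

theorem sum_sum_eq_add_compl_of_symm (hB : ∀ v w, B v w = B w v) (S : Finset V) :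
    ∑ v, ∑ w, B v w =
      ∑ v ∈ S, ∑ w ∈ S, B v w + 2 * ∑ v ∈ S, ∑ w ∈ Sᶜ, B v w + ∑ v ∈ Sᶜ, ∑ w ∈ Sᶜ, B v w := by
  simp only [← sum_add_sum_compl S, sum_add_distrib, sum_sum_comm_of_symm hB Sᶜ S]
  ring

theorem sum_sum_sub_compl_of_symm (hB : ∀ v w, B v w = B w v) (S : Finset V) :
    ∑ v ∈ S, ∑ w, B v w - ∑ v ∈ Sᶜ, ∑ w, B v w =
      ∑ v ∈ S, ∑ w ∈ S, B v w - ∑ v ∈ Sᶜ, ∑ w ∈ Sᶜ, B v w := by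
  simp only [← sum_add_sum_compl S, sum_add_distrib, sum_sum_comm_of_symm hB Sᶜ S]
  ring

end DoubleSums

section AssignmentSum

variable {V R : Type*} [Fintype V] [CommRing R]

/-- The objective of the quadratic assignment problem. When `A` is the adjacency matrix of a graph
`F` and `C` is a matrix of edge weights, this is twice the weight of the copy `g(F)`, since each
edge is counted in both directions. -/
def assignmentSum (A C : Matrix V V R) (g : Perm V) : R :=
  ∑ v, ∑ w, A v w * C (g v) (g w)

variable [DecidableEq V] {A C : Matrix V V R}

theorem assignmentSum_eq_add_compl (hA : A.IsSymm) (hC : C.IsSymm) (S : Finset V) (g : Perm V) :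
    assignmentSum A C g =
      ∑ v ∈ S, ∑ w ∈ S, A v w * C (g v) (g w) + 2 * ∑ v ∈ S, ∑ w ∈ Sᶜ, A v w * C (g v) (g w) +
        ∑ v ∈ Sᶜ, ∑ w ∈ Sᶜ, A v w * C (g v) (g w) :=
  sum_sum_eq_add_compl_of_symm (fun v w ↦ by rw [hA.apply, hC.apply]) S

theorem assignmentSum_sub_mul_swap (hA : A.IsSymm) (hA₀ : ∀ v, A v v = 0) (hC : C.IsSymm)
    {u l : V} (hul : u ≠ l) (g : Perm V) :
    assignmentSum A C g - assignmentSum A C (g * swap u l) =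
      2 * ∑ w ∈ {u, l}ᶜ, (A u w - A l w) * (C (g u) (g w) - C (g l) (g w)) := by
  have swap_fix : ∀ w ∈ ({u, l} : Finset V)ᶜ, swap u l w = w := fun w hw ↦ by
    rw [mem_compl, mem_insert, mem_singleton, not_or] at hw
    exact swap_apply_of_ne_of_ne hw.1 hw.2
  have rest : ∑ v ∈ {u, l}ᶜ, ∑ w ∈ {u, l}ᶜ, A v w * C (g (swap u l v)) (g w) =
      ∑ v ∈ {u, l}ᶜ, ∑ w ∈ {u, l}ᶜ, A v w * C (g v) (g w) :=
    sum_congr rfl fun v hv ↦ by rw [swap_fix v hv]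
  have cross (x y : V) : ∑ w ∈ {u, l}ᶜ, A x w * C y (g (swap u l w)) =
      ∑ w ∈ {u, l}ᶜ, A x w * C y (g w) :=
    sum_congr rfl fun w hw ↦ by rw [swap_fix w hw]
  rw [assignmentSum_eq_add_compl hA hC {u, l} g,
    assignmentSum_eq_add_compl hA hC {u, l} (g * swap u l)]
  simp only [Perm.mul_apply, sum_pair hul, swap_apply_left, swap_apply_right, cross, rest, hA₀,
    hA.apply u l, hC.apply (g u) (g l), sub_mul, mul_sub, sum_sub_distrib]
  ring

end AssignmentSum

section SymmetricAverage

variable {V R : Type*} [DecidableEq V] [CommRing R]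

theorem card_mul_sum_eq_of_swap_invariant {W : Finset (Perm V)} {K : Finset V}
    {φ : Perm V → V → R} (hW : ∀ g ∈ W, ∀ a ∈ K, ∀ b ∈ K, g * swap a b ∈ W)
    (hφ : ∀ g ∈ W, ∀ a ∈ K, ∀ b ∈ K, φ (g * swap a b) a = φ g b) {v : V} (hv : v ∈ K) :
    (#K : R) * ∑ g ∈ W, φ g v = ∑ g ∈ W, ∑ w ∈ K, φ g w := by
  have sum_eq : ∀ w ∈ K, ∑ g ∈ W, φ g w = ∑ g ∈ W, φ g v := fun w hw ↦
    sum_nbij' (· * swap v w) (· * swap v w) (fun g hg ↦ hW g hg v hv w hw)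
      (fun g hg ↦ hW g hg v hv w hw) (fun g _ ↦ by simp [mul_assoc])
      (fun g _ ↦ by simp [mul_assoc]) (fun g hg ↦ (hφ g hg v hv w hw).symm)
  rw [sum_comm, sum_congr rfl sum_eq, sum_const, nsmul_eq_mul]

variable [Fintype V] {u x v w : V}

theorem mul_swap_mem_filter_apply_eq {g : Perm V} (hg : g ∈ ({g | g u = x} : Finset (Perm V)))
    {a b : V} (ha : a ≠ u) (hb : b ≠ u) : g * swap a b ∈ ({g | g u = x} : Finset (Perm V)) := by
  simpa [swap_apply_of_ne_of_ne ha.symm hb.symm] using hg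

theorem sum_erase_apply_perm (φ : V → R) {g : Perm V} (hg : g u = x) :
    ∑ w ∈ univ.erase u, φ (g w) = ∑ q, φ q - φ x := by
  rw [← Equiv.sum_comp g φ, ← add_sum_erase univ (fun i ↦ φ (g i)) (mem_univ u), hg,
    add_sub_cancel_left]

theorem cast_card_univ_erase (u : V) : ((#(univ.erase u) : ℕ) : R) = Fintype.card V - 1 := by
  rw [cast_card_erase_of_mem (mem_univ u), card_univ]

theorem card_sub_one_mul_sum_apply (φ : V → R) (hw : w ≠ u) :
    (Fintype.card V - 1 : R) * ∑ g : Perm V with g u = x, φ (g w) =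
      #{g : Perm V | g u = x} * (∑ q, φ q - φ x) := by
  have average := card_mul_sum_eq_of_swap_invariant (W := {g : Perm V | g u = x})
    (K := univ.erase u) (φ := fun g w ↦ φ (g w))
    (fun g hg a ha b hb ↦ mul_swap_mem_filter_apply_eq hg (ne_of_mem_erase ha) (ne_of_mem_erase hb))
    (by simp) (mem_erase.mpr ⟨hw, mem_univ w⟩)
  rw [← cast_card_univ_erase u, average, ← nsmul_eq_mul, ← sum_const]
  exact sum_congr rfl fun g hg ↦ sum_erase_apply_perm φ (mem_filter.mp hg).2

theorem card_sub_one_mul_card_sub_two_mul_sum_apply_apply {C : Matrix V V R} (hC : C.IsSymm)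
    (hC₀ : ∀ v, C v v = 0) (hv : v ≠ u) (hw : w ≠ u) (hvw : v ≠ w) :
    (Fintype.card V - 1 : R) * (Fintype.card V - 2) *
        ∑ g : Perm V with g u = x, C (g v) (g w) =
      #{g : Perm V | g u = x} * (∑ p, ∑ q, C p q - 2 * ∑ q, C x q) := by
  have hwK : w ∈ univ.erase u := mem_erase.mpr ⟨hw, mem_univ w⟩
  have average_left := card_mul_sum_eq_of_swap_invariant (W := {g : Perm V | g u = x})
    (K := (univ.erase u).erase w) (φ := fun g v ↦ C (g v) (g w))
    (fun g hg a ha b hb ↦ mul_swap_mem_filter_apply_eq hg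
      (ne_of_mem_erase (mem_of_mem_erase ha)) (ne_of_mem_erase (mem_of_mem_erase hb)))
    (fun g _ a ha b hb ↦ by
      simp [swap_apply_of_ne_of_ne (ne_of_mem_erase ha).symm (ne_of_mem_erase hb).symm])
    (mem_erase.mpr ⟨hvw, mem_erase.mpr ⟨hv, mem_univ v⟩⟩)
  have row_sum : ∀ g ∈ ({g | g u = x} : Finset (Perm V)),
      ∑ v ∈ (univ.erase u).erase w, C (g v) (g w) = ∑ p, C p (g w) - C x (g w) := fun g hg ↦ by
    rw [← sum_erase_apply_perm (fun p ↦ C p (g w)) (mem_filter.mp hg).2,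
      ← add_sum_erase _ (fun v ↦ C (g v) (g w)) hwK, hC₀, zero_add]
  rw [cast_card_erase_of_mem hwK, cast_card_univ_erase, sum_congr rfl row_sum] at average_left
  have average_right := card_sub_one_mul_sum_apply (x := x) (fun q ↦ ∑ p, C p q - C x q) hw
  have column_sum : ∑ p, C p x = ∑ q, C x q := sum_congr rfl fun p _ ↦ hC.apply x p
  rw [← average_left, sum_sub_distrib, sum_comm, column_sum, hC₀] at average_right
  linear_combination average_right

theorem sum_assignmentSum_of_apply_eq {A C : Matrix V V R} (hA : A.IsSymm) (hA₀ : ∀ v, A v v = 0)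
    (hC : C.IsSymm) (hC₀ : ∀ v, C v v = 0) (u x : V) :
    (Fintype.card V - 1 : R) * (Fintype.card V - 2) *
        ∑ g : Perm V with g u = x, assignmentSum A C g =
      #{g : Perm V | g u = x} *
        (2 * (Fintype.card V - 2) * (∑ w, A u w) * ∑ q, C x q +
          (∑ v, ∑ w, A v w - 2 * ∑ w, A u w) * (∑ p, ∑ q, C p q - 2 * ∑ q, C x q)) := by
  set W : Finset (Perm V) := {g | g u = x}
  have split : ∑ g ∈ W, assignmentSum A C g =
      2 * ∑ w ∈ {u}ᶜ, A u w * ∑ g ∈ W, C x (g w) +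
        ∑ v ∈ {u}ᶜ, ∑ w ∈ {u}ᶜ, A v w * ∑ g ∈ W, C (g v) (g w) := by
    have split_apply : ∀ g ∈ W, assignmentSum A C g = 2 * ∑ w ∈ {u}ᶜ, A u w * C x (g w) +
        ∑ v ∈ {u}ᶜ, ∑ w ∈ {u}ᶜ, A v w * C (g v) (g w) := fun g hg ↦ by
      simp [assignmentSum_eq_add_compl hA hC {u} g, hA₀, (mem_filter.mp hg).2]
    simp only [mul_sum, sum_congr rfl split_apply, sum_add_distrib]
    rw [sum_comm, sum_comm (s := W)]
    exact congrArg _ (sum_congr rfl fun v _ ↦ sum_comm)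
  have degree_eq : ∑ w, A u w = ∑ w ∈ {u}ᶜ, A u w := by
    rw [← sum_add_sum_compl {u}, sum_singleton, hA₀, zero_add]
  have total_eq : ∑ v, ∑ w, A v w - 2 * ∑ w, A u w = ∑ v ∈ {u}ᶜ, ∑ w ∈ {u}ᶜ, A v w := by
    rw [sum_sum_eq_add_compl_of_symm (fun v w ↦ hA.apply w v) {u}, degree_eq]
    simp [hA₀]
  have star_term : (Fintype.card V - 1 : R) * ∑ w ∈ {u}ᶜ, A u w * ∑ g ∈ W, C x (g w) =
      (∑ w, A u w) * (#W * ∑ q, C x q) := by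
    rw [degree_eq, mul_sum, sum_mul]
    refine sum_congr rfl fun w hw ↦ ?_
    rw [mul_left_comm, card_sub_one_mul_sum_apply (C x) (by simpa using hw), hC₀, sub_zero]
  have rest_term : (Fintype.card V - 1 : R) * (Fintype.card V - 2) *
      ∑ v ∈ {u}ᶜ, ∑ w ∈ {u}ᶜ, A v w * ∑ g ∈ W, C (g v) (g w) =
        (∑ v ∈ {u}ᶜ, ∑ w ∈ {u}ᶜ, A v w) * (#W * (∑ p, ∑ q, C p q - 2 * ∑ q, C x q)) := by
    simp only [mul_sum (s := {u}ᶜ), sum_mul (s := {u}ᶜ)]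
    refine sum_congr rfl fun v hv ↦ sum_congr rfl fun w hw ↦ ?_
    obtain rfl | hvw := eq_or_ne v w
    · simp [hA₀]
    · rw [mul_left_comm, card_sub_one_mul_card_sub_two_mul_sum_apply_apply hC hC₀
        (by simpa using hv) (by simpa using hw) hvw]
  rw [split, total_eq]
  linear_combination 2 * (Fintype.card V - 2 : R) * star_term + rest_term

end SymmetricAverage

section SwapSensitive

variable {V : Type*} [DecidableEq V]

/-- The points `r` for which exchanging the images of `r` and `l` can change the truth value
of `Q`. -/
def swapSensitive (Q : Perm V → Prop) (l : V) : Set V :=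
  {r | ∃ g, ¬(Q g ↔ Q (g * swap r l))}

variable {Q : Perm V → Prop} {l : V}

theorem notMem_swapSensitive_self : l ∉ swapSensitive Q l := by
  simp [swapSensitive, ← Perm.one_def]

theorem exists_and_not_mul_swap_of_mem_swapSensitive {r : V} (hr : r ∈ swapSensitive Q l) :
    ∃ g, Q g ∧ ¬Q (g * swap r l) := by
  obtain ⟨g, hg⟩ := hr
  by_cases hQ : Q g
  · exact ⟨g, hQ, fun h ↦ hg (iff_of_true hQ h)⟩
  · refine ⟨g * swap r l, by_contra fun h ↦ hg (iff_of_false hQ h), ?_⟩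
    rwa [mul_swap_mul_self]

theorem mem_closure_swap_of_forall_mem_eq [Finite V] {S : Set V} (hl : l ∉ S) {σ : Perm V}
    (hσ : ∀ v ∈ S, σ v = v) :
    σ ∈ Subgroup.closure {τ : Perm V | ∃ r ∉ S, r ≠ l ∧ τ = swap r l} := by
  set H := Subgroup.closure {τ : Perm V | ∃ r ∉ S, r ≠ l ∧ τ = swap r l}
  have orbit_l : ∀ x ∉ S, x ∈ MulAction.orbit H l := fun x hx ↦ by
    obtain rfl | hxl := eq_or_ne x l
    · exact MulAction.mem_orbit_self x
    · exact ⟨⟨swap x l, Subgroup.subset_closure ⟨x, hx, hxl, rfl⟩⟩, swap_apply_right x l⟩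
  refine (mem_closure_isSwap ?_).mpr ⟨Set.toFinite _, fun x ↦ ?_⟩
  · rintro _ ⟨r, -, hrl, rfl⟩
    exact ⟨r, l, hrl, rfl⟩
  · by_cases hx : x ∈ S
    · rw [hσ x hx]
      exact MulAction.mem_orbit_self x
    · have hσx : σ x ∉ S := fun h ↦ hx (σ.injective (hσ _ h) ▸ h)
      rw [MulAction.orbit_eq_iff.mpr (orbit_l x hx)]
      exact orbit_l _ hσx

theorem iff_of_eqOn_swapSensitive [Finite V] {g h : Perm V}
    (hgh : Set.EqOn g h (swapSensitive Q l)) : Q g ↔ Q h := by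
  have hσ : ∀ v ∈ swapSensitive Q l, (g⁻¹ * h) v = v := fun v hv ↦ by
    rw [Perm.mul_apply, ← hgh hv]
    exact g.symm_apply_apply v
  have invariant : ∀ σ ∈ Subgroup.closure {τ | ∃ r ∉ swapSensitive Q l, r ≠ l ∧ τ = swap r l},
      ∀ k, Q k ↔ Q (k * σ) := fun σ hσ ↦ by
    induction hσ using Subgroup.closure_induction with
    | mem τ hτ =>
      obtain ⟨r, hr, -, rfl⟩ := hτ
      exact fun k ↦ by_contra fun hk ↦ hr ⟨k, hk⟩
    | one => simp
    | mul σ τ _ _ ihσ ihτ => exact fun k ↦ by rw [ihσ, ihτ, mul_assoc]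
    | inv σ _ ih => exact fun k ↦ by rw [ih (k * σ⁻¹), inv_mul_cancel_right]
  rw [invariant _ (mem_closure_swap_of_forall_mem_eq notMem_swapSensitive_self hσ) g,
    mul_inv_cancel_left]

end SwapSensitive

section Extension

variable {V : Type*} [DecidableEq V]

theorem exists_perm_eqOn_image_eq [Finite V] (g : Perm V) {B K A : Finset V} (hK : Disjoint K B)
    (hA : Disjoint A (B.image g)) (hcard : #K = #A) :
    ∃ h : Perm V, Set.EqOn h g B ∧ K.image h = A := by
  have := Fintype.ofFinite V
  let e : K ≃ A := K.equivOfCardEq hcard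
  let φ : V → V := fun v ↦ if hv : v ∈ K then e ⟨v, hv⟩ else g v
  have φ_of_mem_K (v : K) : φ v = e v := dif_pos v.2
  have φ_of_mem_B : ∀ v ∈ B, φ v = g v := fun v hv ↦ dif_neg (disjoint_right.mp hK hv)
  have φ_ne : ∀ v ∈ B, ∀ w ∈ K, φ v ≠ φ w := fun v hv w hw h ↦ by
    rw [φ_of_mem_B v hv, φ_of_mem_K ⟨w, hw⟩] at h
    exact disjoint_left.mp hA (e ⟨w, hw⟩).2 (h ▸ mem_image_of_mem g hv)
  have φ_injOn : Set.InjOn φ (B ∪ K : Finset V) := by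
    rw [coe_union, Set.injOn_union (disjoint_coe.mpr hK.symm)]
    refine ⟨?_, fun v hv w hw h ↦ ?_, φ_ne⟩
    · exact g.injective.injOn.congr fun v hv ↦ (φ_of_mem_B v hv).symm
    · rw [φ_of_mem_K ⟨v, hv⟩, φ_of_mem_K ⟨w, hw⟩] at h
      exact congrArg Subtype.val (e.injective (Subtype.ext h))
  obtain ⟨ψ, hψ⟩ := exists_equiv_extend_of_card_eq (t := (univ : Finset V)) card_univ.symm
    (subset_univ _) φ_injOn
  let h : Perm V := ψ.trans (Equiv.subtypeUnivEquiv mem_univ)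
  have h_eq : ∀ v ∈ B ∪ K, h v = φ v := hψ
  refine ⟨h, fun v hv ↦ (h_eq v (mem_union_left _ hv)).trans (φ_of_mem_B v hv),
    eq_of_subset_of_card_le (image_subset_iff.mpr fun v hv ↦ ?_) ?_⟩
  · rw [h_eq v (mem_union_right _ hv), φ_of_mem_K ⟨v, hv⟩]
    exact (e ⟨v, hv⟩).2
  · rw [card_image_of_injective _ h.injective, hcard]

theorem sum_le_of_forall_card_eq {ι : Type*} {T : ι → ℤ} {s : Finset ι} {k : ℕ} {L : ℤ}
    (hT : ∀ q ∈ s, T q = 0 ∨ 2 ≤ T q) (hk : k ≤ #s) (hL : L < 2 * k)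
    (hsum : ∀ t ⊆ s, #t = k → ∑ q ∈ t, T q ≤ L) : ∑ q ∈ s, T q ≤ L := by
  classical
  set U := {q ∈ s | T q ≠ 0}
  obtain hUk | hkU := le_total #U k
  · obtain ⟨t, hUt, hts, ht⟩ := exists_subsuperset_card_eq (filter_subset _ s) hUk hk
    rw [← sum_subset hts fun q hq hqt ↦ by_contra fun h ↦ hqt (hUt (mem_filter.mpr ⟨hq, h⟩))]
    exact hsum t hts ht
  · obtain ⟨t, htU, ht⟩ := exists_subset_card_eq hkU
    have two_le : ∀ q ∈ t, 2 ≤ T q := fun q hq ↦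
      (hT q (mem_filter.mp (htU hq)).1).resolve_left (mem_filter.mp (htU hq)).2
    have h := card_nsmul_le_sum t T 2 two_le
    rw [ht, nsmul_eq_mul] at h
    linarith [hsum t (htU.trans (filter_subset _ s)) ht]

theorem exists_perm_eqOn_apply_eq (f : Perm V) {B : Finset V} {u z : V} (hu : u ∉ B)
    (hz : z ∉ B.image f) : ∃ g : Perm V, Set.EqOn g f B ∧ g u = z :=
  ⟨swap (f u) z * f, fun _ hv ↦ swap_apply_of_ne_of_ne
    (f.injective.ne (ne_of_mem_of_not_mem hv hu)) (ne_of_mem_of_not_mem (mem_image_of_mem f hv) hz),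
    swap_apply_left _ _⟩

theorem exists_perm_eqOn_apply_eq_apply_eq (f : Perm V) {B : Finset V} {u l z z' : V} (hu : u ∉ B)
    (hl : l ∉ B) (hul : u ≠ l) (hz : z ∉ B.image f) (hz' : z' ∉ B.image f) (hzz' : z ≠ z') :
    ∃ g : Perm V, Set.EqOn g f B ∧ g u = z ∧ g l = z' := by
  obtain ⟨g₁, hg₁, rfl⟩ := exists_perm_eqOn_apply_eq f hu hz
  have hl_insert : l ∉ insert u B := by simp [hul.symm, hl]
  have hz'_image : z' ∉ (insert u B).image g₁ := by
    rw [image_insert, image_congr hg₁, mem_insert, not_or]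
    exact ⟨hzz'.symm, hz'⟩
  obtain ⟨g, hg, rfl⟩ := exists_perm_eqOn_apply_eq g₁ hl_insert hz'_image
  exact ⟨g, (hg.mono (coe_subset.mpr (subset_insert u B))).trans hg₁,
    hg (mem_insert_self u B), rfl⟩

theorem exists_separating_partition [Fintype V] {Q : Perm V → Prop} {B : Finset V} {u l : V}
    (hu : u ∉ B) (hl : l ∉ B) (hul : u ≠ l)
    (hQ : ∀ g h : Perm V, Set.EqOn g h (insert u B : Finset V) → (Q g ↔ Q h)) {f : Perm V}
    (hf : Q f) (hfl : ¬Q (f * swap u l)) :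
    ∃ P M : Finset V, P.Nonempty ∧ M.Nonempty ∧ Disjoint P M ∧ P ∪ M = (B.image f)ᶜ ∧
      ∀ z ∈ P, ∀ z' ∈ M, ∃ g₀ : Perm V, Set.EqOn g₀ f B ∧ g₀ u = z ∧ g₀ l = z' ∧
        ∀ g : Perm V, Set.EqOn g g₀ (insert l (insert u B) : Finset V) →
          Q g ∧ ¬Q (g * swap u l) := by
  classical
  let Good (z : V) : Prop := ∃ g : Perm V, Set.EqOn g f B ∧ g u = z ∧ Q g
  have iff_good : ∀ g : Perm V, Set.EqOn g f B → (Q g ↔ Good (g u)) := fun g hg ↦ by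
    refine ⟨fun h ↦ ⟨g, hg, rfl, h⟩, fun ⟨h, hh, hu, hQh⟩ ↦ (hQ h g fun v hv ↦ ?_).mp hQh⟩
    obtain rfl | hvB := mem_insert.mp hv
    exacts [hu, (hh hvB).trans (hg hvB).symm]
  have mul_swap_eqOn : ∀ g : Perm V, Set.EqOn g f B → Set.EqOn (g * swap u l) f B :=
    fun g hg v hv ↦ by
      rw [Perm.mul_apply, swap_apply_of_ne_of_ne (ne_of_mem_of_not_mem hv hu)
        (ne_of_mem_of_not_mem hv hl), hg hv]
  have not_good_iff : ∀ g : Perm V, Set.EqOn g f B → (¬Q (g * swap u l) ↔ ¬Good (g l)) :=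
    fun g hg ↦ by rw [iff_good _ (mul_swap_eqOn g hg), Perm.mul_apply, swap_apply_left]
  refine ⟨{z ∈ (B.image f)ᶜ | Good z}, {z ∈ (B.image f)ᶜ | ¬Good z},
    ⟨f u, by simpa [hu] using (iff_good f (Set.eqOn_refl f B)).mp hf⟩,
    ⟨f l, by simpa [hl] using (not_good_iff f (Set.eqOn_refl f B)).mp hfl⟩,
    disjoint_filter_filter_not _ _ _, filter_union_filter_not_eq _ _, fun z hz z' hz' ↦ ?_⟩
  rw [mem_filter, mem_compl] at hz hz'
  have hzz' : z ≠ z' := by rintro rfl; exact hz'.2 hz.2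
  obtain ⟨g₀, hg₀B, rfl, rfl⟩ := exists_perm_eqOn_apply_eq_apply_eq f hu hl hul hz.1 hz'.1 hzz'
  refine ⟨g₀, hg₀B, rfl, rfl, fun g hg ↦ ?_⟩
  have hgu : g u = g₀ u := hg (by simp)
  have hgl : g l = g₀ l := hg (by simp)
  have hgB : Set.EqOn g f B := (hg.mono (by grind)).trans hg₀B
  rw [iff_good g hgB, not_good_iff g hgB, hgu, hgl]
  exact ⟨hz.2, hz'.2⟩

end Extension

section Forests

variable {V : Type*} {F : SimpleGraph V} [DecidableRel F.Adj]

theorem adjMatrix_nonneg (v w : V) : 0 ≤ F.adjMatrix ℤ v w := by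
  rw [SimpleGraph.adjMatrix_apply]
  split_ifs <;> decide

theorem abs_sum_adjMatrix_mul_le {φ : V → ℤ} {k : ℤ} (hφ : ∀ w, |φ w| ≤ k) (v : V)
    (s : Finset V) : |∑ w ∈ s, F.adjMatrix ℤ v w * φ w| ≤ k * ∑ w ∈ s, F.adjMatrix ℤ v w := by
  rw [mul_sum]
  refine (abs_sum_le_sum_abs _ _).trans (sum_le_sum fun w _ ↦ ?_)
  rw [abs_mul, abs_of_nonneg (adjMatrix_nonneg v w), mul_comm k]
  exact mul_le_mul_of_nonneg_left (hφ w) (adjMatrix_nonneg v w)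

theorem sum_sum_adjMatrix_mul [Fintype V] {R : Type*} [CommRing R] (h : Sym2 V → R) :
    ∑ v, ∑ w, F.adjMatrix R v w * h s(v, w) = 2 * ∑ e ∈ F.edgeFinset, h e := by
  classical
  have sum_dart : ∑ d : F.Dart, h d.edge = ∑ v, ∑ w, F.adjMatrix R v w * h s(v, w) := by
    simp only [SimpleGraph.adjMatrix_apply, ite_mul, one_mul, zero_mul]
    rw [← Fintype.sum_prod_type', ← sum_filter]
    exact sum_bij (fun d _ ↦ d.toProd) (by simp) (fun _ _ _ _ h ↦ SimpleGraph.Dart.ext _ _ h)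
      (fun p hp ↦ ⟨⟨p, (mem_filter.mp hp).2⟩, mem_univ _, rfl⟩) (fun _ _ ↦ rfl)
  rw [← sum_dart, mul_sum,
    ← sum_fiberwise_of_maps_to (t := F.edgeFinset) (g := fun d : F.Dart ↦ d.edge) (by simp)]
  refine sum_congr rfl fun e he ↦ ?_
  rw [sum_congr rfl fun d hd ↦ congrArg h (mem_filter.mp hd).2, sum_const,
    F.dart_edge_fiber_card e (SimpleGraph.mem_edgeFinset.mp he), nsmul_eq_mul, Nat.cast_ofNat]

theorem sum_adjMatrix_eq_degree [Fintype V] (v : V) : ∑ w, F.adjMatrix ℤ v w = F.degree v := by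
  simp [SimpleGraph.adjMatrix_apply, ← SimpleGraph.card_neighborFinset_eq_degree,
    SimpleGraph.neighborFinset_eq_filter]

theorem sum_adjMatrix_le_degree [Fintype V] (v : V) (s : Finset V) :
    ∑ w ∈ s, F.adjMatrix ℤ v w ≤ F.degree v := by
  rw [← sum_adjMatrix_eq_degree]
  exact sum_le_univ_sum_of_nonneg fun w ↦ adjMatrix_nonneg v w

theorem card_edgeFinset_lt_card_of_isAcyclic [Fintype V] [Nonempty V] (hF : F.IsAcyclic) :
    #F.edgeFinset < Fintype.card V := by
  classical
  obtain ⟨T, hFT, -, hT⟩ :=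
    SimpleGraph.connected_top.exists_isTree_le_of_le_of_isAcyclic (le_top : F ≤ ⊤) hF
  have := card_le_card (SimpleGraph.edgeFinset_mono hFT)
  have := hT.card_edgeFinset
  lia

theorem sum_sum_adjMatrix_le_of_isAcyclic (hF : F.IsAcyclic) {T : Finset V} (hT : T.Nonempty) :
    ∑ v ∈ T, ∑ w ∈ T, F.adjMatrix ℤ v w ≤ 2 * (#T - 1) := by
  have : Nonempty T := hT.to_subtype
  have card_edges : #(F.induce (T : Set V)).edgeFinset < #T :=
    (card_edgeFinset_lt_card_of_isAcyclic (hF.induce _)).trans_eq (Fintype.card_coe T)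
  have double_count : ∑ v ∈ T, ∑ w ∈ T, F.adjMatrix ℤ v w =
      2 * #(F.induce (T : Set V)).edgeFinset := by
    have := sum_sum_adjMatrix_mul (F := F.induce (T : Set V)) (fun _ ↦ (1 : ℤ))
    simp only [mul_one, sum_const, nsmul_eq_mul] at this
    rw [← this, ← sum_coe_sort T]
    exact sum_congr rfl fun v _ ↦ (sum_coe_sort T (F.adjMatrix ℤ v)).symm
  rw [double_count]
  lia

theorem exists_mem_sum_adjMatrix_le_one (hF : F.IsAcyclic) {T : Finset V} (hT : T.Nonempty) :
    ∃ v ∈ T, ∑ w ∈ T, F.adjMatrix ℤ v w ≤ 1 := by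
  by_contra! h
  have := card_nsmul_le_sum T (fun v ↦ ∑ w ∈ T, F.adjMatrix ℤ v w) 2 h
  rw [nsmul_eq_mul] at this
  linarith [sum_sum_adjMatrix_le_of_isAcyclic hF hT]

theorem sum_degree_add_two_le [Fintype V] (hF : F.IsAcyclic) {S : Finset V} (hS : S.Nonempty) :
    ∑ v ∈ S, F.degree v + 2 ≤ Fintype.card V + #S := by
  classical
  have total := sum_sum_adjMatrix_le_of_isAcyclic hF (hS.mono (subset_univ S))
  have inside := sum_sum_adjMatrix_le_of_isAcyclic hF hS
  have outside : 0 ≤ ∑ v ∈ Sᶜ, ∑ w ∈ Sᶜ, F.adjMatrix ℤ v w :=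
    sum_nonneg fun v _ ↦ sum_nonneg fun w _ ↦ adjMatrix_nonneg v w
  have degrees : (∑ v ∈ S, F.degree v : ℤ) =
      ∑ v ∈ S, ∑ w ∈ S, F.adjMatrix ℤ v w + ∑ v ∈ S, ∑ w ∈ Sᶜ, F.adjMatrix ℤ v w := by
    simp only [← sum_adjMatrix_eq_degree, ← sum_add_distrib, sum_add_sum_compl]
  rw [sum_sum_eq_add_compl_of_symm (fun v w ↦ F.isSymm_adjMatrix.apply w v) S, card_univ] at total
  zify
  linarith

end Forests

section BoundedMatrices

variable {V : Type*} {C : Matrix V V ℤ}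

theorem abs_sum_le_card {ι : Type*} {φ : ι → ℤ} (hφ : ∀ i, |φ i| ≤ 1) (s : Finset ι) :
    |∑ i ∈ s, φ i| ≤ #s := by
  simpa using (abs_sum_le_sum_abs φ s).trans (sum_le_card_nsmul s _ 1 fun i _ ↦ hφ i)

theorem abs_sum_sum_le_card_mul_card (hC₁ : ∀ v w, |C v w| ≤ 1) (S T : Finset V) :
    |∑ v ∈ S, ∑ w ∈ T, C v w| ≤ #S * #T := by
  have := (abs_sum_le_sum_abs (fun v ↦ ∑ w ∈ T, C v w) S).trans
    (sum_le_card_nsmul S _ _ fun v _ ↦ abs_sum_le_card (hC₁ v) T)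
  rwa [nsmul_eq_mul] at this

theorem abs_sum_sum_self_le (hC₀ : ∀ v, C v v = 0) (hC₁ : ∀ v w, |C v w| ≤ 1) (S : Finset V) :
    |∑ v ∈ S, ∑ w ∈ S, C v w| ≤ #S * (#S - 1) := by
  classical
  have row_le : ∀ v ∈ S, |∑ w ∈ S, C v w| ≤ #S - 1 := fun v hv ↦ by
    rw [← add_sum_erase S (C v) hv, hC₀, zero_add, ← cast_card_erase_of_mem hv]
    exact abs_sum_le_card (hC₁ v) _
  have := (abs_sum_le_sum_abs (fun v ↦ ∑ w ∈ S, C v w) S).trans (sum_le_card_nsmul S _ _ row_le)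
  rwa [nsmul_eq_mul] at this

theorem exists_two_mul_abs_row_sum_lt_card [Fintype V] [Nonempty V] (hC : C.IsSymm)
    (hC₀ : ∀ v, C v v = 0) (hC₁ : ∀ v w, |C v w| ≤ 1) (hsum : ∑ v, ∑ w, C v w = 0) :
    ∃ x, 2 * |∑ q, C x q| < Fintype.card V := by
  classical
  by_contra! h
  set P : Finset V := {x | 0 ≤ ∑ q, C x q}
  have pos_part : (#P : ℤ) * Fintype.card V ≤ 2 * ∑ x ∈ P, ∑ q, C x q := by
    rw [← nsmul_eq_mul, mul_sum]
    refine card_nsmul_le_sum P _ _ fun x hx ↦ ?_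
    rw [← abs_of_nonneg (mem_filter.mp hx).2]
    exact h x
  have neg_part : (#Pᶜ : ℤ) * Fintype.card V ≤ 2 * -∑ x ∈ Pᶜ, ∑ q, C x q := by
    rw [← nsmul_eq_mul, ← sum_neg_distrib, mul_sum]
    refine card_nsmul_le_sum Pᶜ _ _ fun x hx ↦ ?_
    rw [← abs_of_neg (by simpa [P] using hx)]
    exact h x
  have balance := (sum_add_sum_compl P fun x ↦ ∑ q, C x q).trans hsum
  have difference := sum_sum_sub_compl_of_symm (fun v w ↦ hC.apply w v) P
  have inside := (abs_le.mp (abs_sum_sum_self_le hC₀ hC₁ P)).2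
  have outside := (abs_le.mp (abs_sum_sum_self_le hC₀ hC₁ Pᶜ)).1
  have card_add : (#P + #Pᶜ : ℤ) = Fintype.card V := by exact_mod_cast card_add_card_compl P
  have card_pos : (0 : ℤ) < Fintype.card V := by exact_mod_cast Fintype.card_pos
  obtain hle | hle := le_total #P #Pᶜ <;> zify at hle <;> nlinarith

theorem abs_sum_sum_compl_le [Fintype V] [DecidableEq V] (hC₁ : ∀ v w, |C v w| ≤ 1)
    (hsum : ∑ v, ∑ w, C v w = 0) (X : Finset V) :
    |∑ v ∈ Xᶜ, ∑ w ∈ Xᶜ, C v w| ≤ 2 * #X * Fintype.card V := by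
  have split : ∑ v ∈ Xᶜ, ∑ w ∈ Xᶜ, C v w =
      -∑ v ∈ X, ∑ w, C v w - ∑ v ∈ Xᶜ, ∑ w ∈ X, C v w := by
    rw [← sum_add_sum_compl X] at hsum
    simp only [← sum_add_sum_compl X (C _), sum_add_distrib] at hsum ⊢
    linarith
  have rows := abs_sum_sum_le_card_mul_card hC₁ X univ
  have cross := abs_sum_sum_le_card_mul_card hC₁ Xᶜ X
  have card_le : (#Xᶜ : ℤ) * #X ≤ Fintype.card V * #X := by gcongr; exact card_le_univ _
  rw [card_univ] at rows
  calc |∑ v ∈ Xᶜ, ∑ w ∈ Xᶜ, C v w|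
      ≤ |∑ v ∈ X, ∑ w, C v w| + |∑ v ∈ Xᶜ, ∑ w ∈ X, C v w| := by
        rw [split, ← abs_neg (∑ v ∈ X, ∑ w, C v w)]
        exact abs_sub _ _
    _ ≤ 2 * #X * Fintype.card V := by linarith

end BoundedMatrices

section SeparatedRows

variable {V : Type*} [DecidableEq V] {C : Matrix V V ℤ} {P M : Finset V} {L : ℤ}

theorem two_mul_card_le_of_separated (hC : C.IsSymm) (hC₁ : ∀ v w, |C v w| ≤ 1)
    (hPM : Disjoint P M) (hP : P.Nonempty) (hM : M.Nonempty) (hcard : #M ≤ #P)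
    (hL : ∀ z ∈ P, ∀ z' ∈ M, ∑ q ∈ P ∪ M, (2 - C z q + C z' q) ≤ L) : 2 * #M ≤ L := by
  have pair_le : ∀ z ∈ P, ∀ z' ∈ M, ∑ q ∈ M, (1 - C z q) + ∑ q ∈ P, (1 + C z' q) ≤ L :=
    fun z hz z' hz' ↦ by
      refine le_trans ?_ (hL z hz z' hz')
      rw [sum_union hPM, add_comm]
      gcongr with q _ q _
      · linarith [le_of_abs_le (hC₁ z q)]
      · linarith [neg_le_of_abs_le (hC₁ z' q)]
  set cross := ∑ z ∈ P, ∑ q ∈ M, C z q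
  have double_count : #M * (#P * #M - cross) + #P * (#P * #M + cross) ≤ #P * #M * L := by
    have := sum_le_sum fun z hz ↦ sum_le_sum (pair_le z hz)
    simp only [sum_add_distrib, sum_sub_distrib, sum_const, nsmul_eq_mul, ← mul_sum, mul_one,
      sum_sum_comm_of_symm (fun v w ↦ hC.apply w v) M P] at this
    linarith
  have cross_ge : -(#P * #M : ℤ) ≤ cross := (abs_le.mp (abs_sum_sum_le_card_mul_card hC₁ P M)).1
  have : (0 : ℤ) ≤ (#P - #M) * (#P * #M + cross) :=
    mul_nonneg (by simpa using hcard) (by linarith)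
  have : (0 : ℤ) < #P * #M := by exact_mod_cast mul_pos hP.card_pos hM.card_pos
  nlinarith

theorem card_mul_le_of_separated (hC₁ : ∀ v w, |C v w| ≤ 1)
    (hPM : Disjoint P M) (hM : M.Nonempty)
    (hL : ∀ z ∈ P, ∀ z' ∈ M, ∑ q ∈ P ∪ M, (2 - C z q + C z' q) ≤ L) :
    #P * (#P + #M - L) ≤ #M * (#P + #M) + ∑ v ∈ P ∪ M, ∑ w ∈ P ∪ M, C v w := by
  have card_union : (#(P ∪ M) : ℤ) = #P + #M := by exact_mod_cast card_union_of_disjoint hPM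
  have row_ge (z : V) : -(#P + #M : ℤ) ≤ ∑ q ∈ P ∪ M, C z q :=
    card_union ▸ (abs_le.mp (abs_sum_le_card (hC₁ z) _)).1
  obtain ⟨z', hz'⟩ := hM
  have row_ge_of_mem : ∀ z ∈ P, (#P + #M - L : ℤ) ≤ ∑ q ∈ P ∪ M, C z q := fun z hz ↦ by
    have := hL z hz z' hz'
    simp only [sum_add_distrib, sum_sub_distrib, sum_const, nsmul_eq_mul, card_union] at this
    linarith [row_ge z']
  have sum_P := card_nsmul_le_sum P _ _ row_ge_of_mem
  have sum_M := card_nsmul_le_sum M _ _ fun z _ ↦ row_ge z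
  rw [nsmul_eq_mul] at sum_P sum_M
  rw [sum_union hPM]
  linarith

theorem card_le_two_mul_of_separated [Fintype V] (hC : C.IsSymm) (hC₁ : ∀ v w, |C v w| ≤ 1)
    (hsum : ∑ v, ∑ w, C v w = 0) {X : Finset V} (hX : 24 * #X < Fintype.card V)
    (hPM : Disjoint P M) (hP : P.Nonempty) (hM : M.Nonempty) (hunion : P ∪ M = Xᶜ)
    (hL : ∀ z ∈ P, ∀ z' ∈ M, ∑ q ∈ P ∪ M, (2 - C z q + C z' q) ≤ L) :
    Fintype.card V ≤ 2 * L := by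
  wlog hcard : #M ≤ #P generalizing C P M
  · refine this (C := -C) hC.neg (by simpa using hC₁) (by simpa using hsum) hPM.symm hM hP
      (by rwa [union_comm]) (fun z hz z' hz' ↦ ?_) (le_of_not_ge hcard)
    rw [union_comm]
    simpa [sub_eq_add_neg, add_right_comm] using hL z' hz' z hz
  have small := two_mul_card_le_of_separated hC hC₁ hPM hP hM hcard hL
  have quadratic := card_mul_le_of_separated hC₁ hPM hM hL
  have error := le_of_abs_le (abs_sum_sum_compl_le hC₁ hsum X)
  have card_add : (#P + #M + #X : ℤ) = Fintype.card V := by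
    rw [← card_add_card_compl X, ← hunion, card_union_of_disjoint hPM]
    push_cast
    ring
  rw [hunion] at quadratic
  zify at hX
  by_contra! hlt
  set N : ℤ := #P + #M
  have quadratic_L : 2 * N ^ 2 - 4 * N * L + L ^ 2 ≤ 4 * #X * Fintype.card V := by
    have : 0 ≤ (L - 2 * #M) * (2 * N - L) := mul_nonneg (by linarith) (by linarith)
    linear_combination 2 * quadratic + 2 * error + this
  have quadratic_card : (Fintype.card V : ℤ) ^ 2 ≤ 24 * #X * Fintype.card V := by
    have : 0 ≤ (Fintype.card V - 2 * L) * (8 * N - Fintype.card V - 2 * L) :=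
      mul_nonneg (by linarith) (by linarith)
    rw [← card_add] at this ⊢
    nlinarith
  nlinarith [quadratic_card]

end SeparatedRows

section Exchange

variable {V : Type*} {C : Matrix V V ℤ}

/-- The matrix of a `±1`-colouring of the edges of the complete graph on `V`, with zero diagonal. -/
structure IsSignMatrix (C : Matrix V V ℤ) : Prop where
  isSymm : C.IsSymm
  diag_eq_zero (v : V) : C v v = 0
  eq_one_or_neg_one {v w : V} (hvw : v ≠ w) : C v w = 1 ∨ C v w = -1

theorem IsSignMatrix.abs_le_one (hC : IsSignMatrix C) (v w : V) : |C v w| ≤ 1 := by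
  obtain rfl | hvw := eq_or_ne v w
  · simp [hC.diag_eq_zero]
  · obtain h | h := hC.eq_one_or_neg_one hvw <;> simp [h]

variable [Fintype V] [DecidableEq V] {F : SimpleGraph V} [DecidableRel F.Adj] {B : Finset V}
  {u l : V} {δ : ℤ}

theorem abs_sub_le_two {φ ψ : ℤ} (hφ : |φ| ≤ 1) (hψ : |ψ| ≤ 1) : |φ - ψ| ≤ 2 :=
  (abs_sub φ ψ).trans (by linarith)

theorem le_sum_neighborFinset_of_swap_gap (hC : C.IsSymm) (hC₁ : ∀ v w, |C v w| ≤ 1) (hu : u ∉ B)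
    (hl : l ∉ B) (hul : u ≠ l) (hdeg : F.degree l ≤ 1) (huB : ∑ w ∈ B, F.adjMatrix ℤ u w ≤ 2)
    {g : Perm V} (hgap : 2 * (δ + 6) ≤
      assignmentSum (F.adjMatrix ℤ) C g - assignmentSum (F.adjMatrix ℤ) C (g * swap u l)) :
    δ ≤ ∑ w ∈ F.neighborFinset u \ insert l (insert u B), (C (g u) (g w) - C (g l) (g w)) := by
  set φ : V → ℤ := fun w ↦ C (g u) (g w) - C (g l) (g w)
  have hφ (w : V) : |φ w| ≤ 2 := abs_sub_le_two (hC₁ _ _) (hC₁ _ _)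
  have inner := le_of_abs_le (abs_sum_adjMatrix_mul_le (F := F) hφ u B)
  have leaf := neg_le_of_abs_le (abs_sum_adjMatrix_mul_le (F := F) hφ l {u, l}ᶜ)
  have leaf_le := sum_adjMatrix_le_degree (F := F) l {u, l}ᶜ
  have hB : B ∪ (insert l (insert u B))ᶜ = {u, l}ᶜ := by
    ext w
    simp only [mem_union, mem_compl, mem_insert, mem_singleton]
    grind
  have split : ∑ w ∈ {u, l}ᶜ, F.adjMatrix ℤ u w * φ w =
      ∑ w ∈ B, F.adjMatrix ℤ u w * φ w +
        ∑ w ∈ F.neighborFinset u \ insert l (insert u B), φ w := by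
    rw [← hB, sum_union (disjoint_compl_right.mono_left (by grind))]
    congr 1
    simp only [SimpleGraph.adjMatrix_apply, ite_mul, one_mul, zero_mul, ← sum_filter]
    exact sum_congr (by ext; simp [and_comm]) fun _ _ ↦ rfl
  rw [assignmentSum_sub_mul_swap F.isSymm_adjMatrix (by simp) hC hul] at hgap
  simp only [sub_mul, sum_sub_distrib] at hgap
  zify at hdeg
  linarith

theorem sum_compl_image_eq_add_add (hu : u ∉ B) (hl : l ∉ B) (hul : u ≠ l) (g : Perm V)
    (T : V → ℤ) :
    ∑ q ∈ (B.image g)ᶜ, T q =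
      T (g l) + (T (g u) + ∑ q ∈ ((insert l (insert u B)).image g)ᶜ, T q) := by
  have hgu : g u ∉ B.image g := by simpa using hu
  have hgl : g l ∉ insert (g u) (B.image g) := by simp [hul.symm, hl]
  rw [image_insert, image_insert, ← insert_compl_insert hgu, sum_insert (by simp),
    ← insert_compl_insert hgl, sum_insert (by simp)]
  ring

theorem sum_two_sub_add_le_of_swap_gap (hC : IsSignMatrix C) (hu : u ∉ B) (hl : l ∉ B)
    (hul : u ≠ l) (hdeg : F.degree l ≤ 1) (huB : ∑ w ∈ B, F.adjMatrix ℤ u w ≤ 2) (hδ : 0 < δ)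
    {g₀ : Perm V} (hgap : ∀ g : Perm V, Set.EqOn g g₀ (insert l (insert u B) : Finset V) →
      2 * (δ + 6) ≤
        assignmentSum (F.adjMatrix ℤ) C g - assignmentSum (F.adjMatrix ℤ) C (g * swap u l)) :
    ∑ q ∈ (B.image g₀)ᶜ, (2 - C (g₀ u) q + C (g₀ l) q) ≤ 2 * F.degree u - δ + 4 := by
  set Y := insert l (insert u B)
  set K := F.neighborFinset u \ Y
  set T : V → ℤ := fun q ↦ 2 - C (g₀ u) q + C (g₀ l) q
  have hYu : u ∈ Y := by simp [Y]
  have hYl : l ∈ Y := by simp [Y]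
  have T_values : ∀ q ∈ (Y.image g₀)ᶜ, T q = 0 ∨ 2 ≤ T q := fun q hq ↦ by
    rw [mem_compl] at hq
    have := hC.eq_one_or_neg_one (ne_of_mem_of_not_mem (mem_image_of_mem g₀ hYu) hq)
    have := hC.eq_one_or_neg_one (ne_of_mem_of_not_mem (mem_image_of_mem g₀ hYl) hq)
    lia
  have sum_T_le : ∀ t ⊆ (Y.image g₀)ᶜ, #t = #K → ∑ q ∈ t, T q ≤ 2 * #K - δ := by
    intro t ht hcard
    obtain ⟨g, hg, rfl⟩ := exists_perm_eqOn_image_eq g₀ (K := K) sdiff_disjoint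
      (subset_compl_iff_disjoint_right.mp ht) hcard.symm
    have := le_sum_neighborFinset_of_swap_gap hC.isSymm hC.abs_le_one hu hl hul hdeg huB (hgap g hg)
    rw [hg hYu, hg hYl] at this
    rw [sum_image g.injective.injOn]
    simp only [T, sum_add_distrib, sum_sub_distrib, sum_const, nsmul_eq_mul] at this ⊢
    linarith
  have card_K_le : #K ≤ #(Y.image g₀)ᶜ := by
    rw [card_compl, card_image_of_injective _ g₀.injective, ← card_compl]
    exact card_le_card fun w hw ↦ mem_compl.mpr (mem_sdiff.mp hw).2
  have outer := sum_le_of_forall_card_eq T_values card_K_le (by linarith) sum_T_le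
  have : #K ≤ F.degree u := by
    rw [← F.card_neighborFinset_eq_degree]
    exact card_le_card sdiff_subset
  rw [sum_compl_image_eq_add_add hu hl hul]
  simp only [T, hC.diag_eq_zero, hC.isSymm.apply (g₀ u) (g₀ l)] at outer ⊢
  lia

end Exchange

section SignSensitive

variable {V : Type*} [Fintype V] [DecidableEq V] {F : SimpleGraph V} [DecidableRel F.Adj]
  {C : Matrix V V ℤ} {l u : V}

open Classical in
/-- The vertices `r` such that exchanging the images of `r` and `l` changes the sign of the weight
of some copy of `F`. The sign is encoded by positivity, a weight of `0` being excluded wherever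
this is used. -/
noncomputable def signSensitive (F : SimpleGraph V) [DecidableRel F.Adj] (C : Matrix V V ℤ)
    (l : V) : Finset V :=
  {r | r ∈ swapSensitive (fun g ↦ 0 < assignmentSum (F.adjMatrix ℤ) C g) l}

theorem mem_signSensitive {r : V} : r ∈ signSensitive F C l ↔
    r ∈ swapSensitive (fun g ↦ 0 < assignmentSum (F.adjMatrix ℤ) C g) l := by
  simp [signSensitive]

theorem pos_iff_of_eqOn_signSensitive {g h : Perm V} (hgh : Set.EqOn g h (signSensitive F C l)) :
    0 < assignmentSum (F.adjMatrix ℤ) C g ↔ 0 < assignmentSum (F.adjMatrix ℤ) C h :=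
  iff_of_eqOn_swapSensitive (Q := fun g ↦ 0 < assignmentSum (F.adjMatrix ℤ) C g)
    fun _ hv ↦ hgh (mem_signSensitive.mpr hv)

theorem two_mul_le_sub_of_pos_of_not_pos {a b k : ℤ} (ha : k ≤ |a|) (hb : k ≤ |b|) (ha₀ : 0 < a)
    (hb₀ : ¬0 < b) : 2 * k ≤ a - b := by
  rw [abs_of_pos ha₀] at ha
  rw [abs_of_nonpos (not_lt.mp hb₀)] at hb
  linarith

theorem assignmentSum_sub_mul_swap_le (hC : C.IsSymm) (hC₁ : ∀ v w, |C v w| ≤ 1) (hul : u ≠ l)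
    (g : Perm V) :
    assignmentSum (F.adjMatrix ℤ) C g - assignmentSum (F.adjMatrix ℤ) C (g * swap u l) ≤
      4 * (F.degree u + F.degree l) := by
  have hφ (w : V) : |C (g u) (g w) - C (g l) (g w)| ≤ 2 := abs_sub_le_two (hC₁ _ _) (hC₁ _ _)
  have at_u := le_of_abs_le (abs_sum_adjMatrix_mul_le (F := F) hφ u {u, l}ᶜ)
  have at_l := neg_le_of_abs_le (abs_sum_adjMatrix_mul_le (F := F) hφ l {u, l}ᶜ)
  rw [assignmentSum_sub_mul_swap F.isSymm_adjMatrix (by simp) hC hul]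
  simp only [sub_mul, sum_sub_distrib]
  linarith [sum_adjMatrix_le_degree (F := F) u {u, l}ᶜ, sum_adjMatrix_le_degree (F := F) l {u, l}ᶜ]

section LargeWeights

variable (hC : IsSignMatrix C) (hsum : ∑ v, ∑ w, C v w = 0) (hF : F.IsAcyclic)
  (hl : F.degree l ≤ 1)
  (hlarge : ∀ g : Perm V, (F.maxDegree + 37 : ℤ) ≤ |assignmentSum (F.adjMatrix ℤ) C g|)

include hC hl hlarge

theorem le_degree_of_mem_signSensitive (hu : u ∈ signSensitive F C l) : 35 ≤ F.degree u := by
  have hu := mem_signSensitive.mp hu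
  have hul : u ≠ l := ne_of_mem_of_not_mem hu notMem_swapSensitive_self
  obtain ⟨g, hg, hgl⟩ := exists_and_not_mul_swap_of_mem_swapSensitive hu
  have := two_mul_le_sub_of_pos_of_not_pos (hlarge _) (hlarge _) hg hgl
  have := assignmentSum_sub_mul_swap_le (F := F) hC.isSymm hC.abs_le_one hul g
  have := F.degree_le_maxDegree u
  lia

include hF in
theorem mul_card_signSensitive_le : 34 * #(signSensitive F C l) ≤ Fintype.card V := by
  obtain hS | hS := (signSensitive F C l).eq_empty_or_nonempty
  · simp [hS]
  have := sum_degree_add_two_le hF hS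
  have := card_nsmul_le_sum _ _ 35 fun u ↦ le_degree_of_mem_signSensitive hC hl hlarge (u := u)
  rw [smul_eq_mul] at this
  lia

include hsum hF in
theorem card_lt_two_mul_degree_of_mem_signSensitive (hu : u ∈ signSensitive F C l)
    (huS : ∑ w ∈ signSensitive F C l, F.adjMatrix ℤ u w ≤ 2) :
    Fintype.card V < 2 * F.degree u := by
  set S := signSensitive F C l
  have hlS : l ∉ S := fun h ↦ notMem_swapSensitive_self (mem_signSensitive.mp h)
  have hul : u ≠ l := ne_of_mem_of_not_mem hu hlS
  have huB : u ∉ S.erase u := notMem_erase u S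
  have hlB : l ∉ S.erase u := fun h ↦ hlS (mem_of_mem_erase h)
  obtain ⟨f, hf, hfl⟩ := exists_and_not_mul_swap_of_mem_swapSensitive (mem_signSensitive.mp hu)
  obtain ⟨P, M, hP, hM, hPM, hunion, hsep⟩ :=
    exists_separating_partition (Q := fun g ↦ 0 < assignmentSum (F.adjMatrix ℤ) C g) huB hlB hul
      (fun g h hgh ↦ pos_iff_of_eqOn_signSensitive (by rwa [insert_erase hu] at hgh)) hf hfl
  have hsum_erase : ∑ w ∈ S.erase u, F.adjMatrix ℤ u w ≤ 2 :=
    (sum_le_sum_of_subset_of_nonneg (erase_subset u S) fun w _ _ ↦ adjMatrix_nonneg u w).trans huS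
  have exchange : ∀ z ∈ P, ∀ z' ∈ M, ∑ q ∈ P ∪ M, (2 - C z q + C z' q) ≤
      2 * F.degree u - (F.maxDegree + 31) + 4 := fun z hz z' hz' ↦ by
    obtain ⟨g₀, hg₀, rfl, rfl, hQ⟩ := hsep z hz z' hz'
    rw [hunion, ← image_congr hg₀]
    refine sum_two_sub_add_le_of_swap_gap hC huB hlB hul hl hsum_erase (by lia) fun g hg ↦ ?_
    linarith [two_mul_le_sub_of_pos_of_not_pos (hlarge _) (hlarge _) (hQ g hg).1 (hQ g hg).2]
  have hX : 24 * #((S.erase u).image f) < Fintype.card V := by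
    rw [card_image_of_injective _ f.injective, card_erase_of_mem hu]
    have := mul_card_signSensitive_le hC hF hl hlarge
    have := card_pos.mpr ⟨u, hu⟩
    lia
  have := card_le_two_mul_of_separated hC.isSymm hC.abs_le_one hsum hX hPM hP hM hunion exchange
  have := F.degree_le_maxDegree u
  lia

include hsum hF in
theorem card_signSensitive_le_one : #(signSensitive F C l) ≤ 1 := by
  set S := signSensitive F C l
  by_contra! hS
  obtain ⟨u, hu, hu_le⟩ := exists_mem_sum_adjMatrix_le_one hF (card_pos.mp (zero_lt_one.trans hS))
  have hSu : (S.erase u).Nonempty := card_pos.mp (by rw [card_erase_of_mem hu]; lia)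
  obtain ⟨v, hv, hv_le⟩ := exists_mem_sum_adjMatrix_le_one hF hSu
  have hv_le_two : ∑ w ∈ S, F.adjMatrix ℤ v w ≤ 2 := by
    rw [← add_sum_erase S _ hu]
    have : F.adjMatrix ℤ v u ≤ 1 := by
      rw [SimpleGraph.adjMatrix_apply]
      split_ifs <;> decide
    linarith
  have := card_lt_two_mul_degree_of_mem_signSensitive hC hsum hF hl hlarge hu (by linarith)
  have := card_lt_two_mul_degree_of_mem_signSensitive hC hsum hF hl hlarge (mem_of_mem_erase hv)
    hv_le_two
  have := sum_degree_add_two_le hF (insert_nonempty u {v})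
  rw [sum_pair (ne_of_mem_erase hv).symm, card_pair (ne_of_mem_erase hv).symm] at this
  lia

end LargeWeights

end SignSensitive

section ConditionalAverage

variable {V : Type*} [Fintype V] {A C : Matrix V V ℤ} {u : V} {k : ℤ}

theorem card_mul_le_abs_sum {ι : Type*} {s : Finset ι} {a : ι → ℤ} (ha : ∀ i ∈ s, k ≤ |a i|)
    (hsign : (∀ i ∈ s, 0 < a i) ∨ ∀ i ∈ s, ¬0 < a i) : #s * k ≤ |∑ i ∈ s, a i| := by
  obtain hpos | hnonpos := hsign
  · refine le_abs.mpr (.inl ?_)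
    rw [← nsmul_eq_mul]
    exact card_nsmul_le_sum s a k fun i hi ↦ (ha i hi).trans_eq (abs_of_pos (hpos i hi))
  · refine le_abs.mpr (.inr ?_)
    rw [← nsmul_eq_mul, ← sum_neg_distrib]
    exact card_nsmul_le_sum s (-a) k fun i hi ↦
      (ha i hi).trans_eq (abs_of_nonpos (not_lt.mp (hnonpos i hi)))

theorem mul_le_abs_row_sum_of_pos_iff (hA : A.IsSymm) (hA₀ : ∀ v, A v v = 0) (hC : C.IsSymm)
    (hC₀ : ∀ v, C v v = 0) (hsum : ∑ v, ∑ w, C v w = 0)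
    (hlarge : ∀ g : Perm V, k ≤ |assignmentSum A C g|)
    (hsign : ∀ g h : Perm V, g u = h u → (0 < assignmentSum A C g ↔ 0 < assignmentSum A C h))
    (x : V) :
    (Fintype.card V - 1) * (Fintype.card V - 2) * k ≤
      2 * |∑ q, C x q| * |Fintype.card V * ∑ w, A u w - ∑ v, ∑ w, A v w| := by
  classical
  set n : ℤ := (Fintype.card V : ℤ)
  set W : Finset (Perm V) := {g | g u = x}
  have swap_mem : swap u x ∈ W := by simp [W]
  have same_sign : (∀ g ∈ W, 0 < assignmentSum A C g) ∨ ∀ g ∈ W, ¬0 < assignmentSum A C g := by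
    have iff_swap : ∀ g ∈ W, (0 < assignmentSum A C g ↔ 0 < assignmentSum A C (swap u x)) :=
      fun g hg ↦ hsign _ _ (by rw [(mem_filter.mp hg).2, swap_apply_left])
    by_cases hswap : 0 < assignmentSum A C (swap u x)
    · exact .inl fun g hg ↦ (iff_swap g hg).mpr hswap
    · exact .inr fun g hg ↦ (iff_swap g hg).not.mpr hswap
  have card_pairs_nonneg : 0 ≤ (n - 1) * (n - 2) := by
    obtain hn | hn : n = 1 ∨ 2 ≤ n := by
      have : 0 < Fintype.card V := Fintype.card_pos_iff.mpr ⟨u⟩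
      lia
    · simp [hn]
    · exact mul_nonneg (by linarith) (by linarith)
  have average : (n - 1) * (n - 2) * ∑ g ∈ W, assignmentSum A C g =
      #W * (2 * (∑ q, C x q) * (n * ∑ w, A u w - ∑ v, ∑ w, A v w)) := by
    rw [sum_assignmentSum_of_apply_eq hA hA₀ hC hC₀, hsum]
    ring
  refine le_of_mul_le_mul_left (a := (#W : ℤ)) ?_ (by exact_mod_cast card_pos.mpr ⟨_, swap_mem⟩)
  calc (#W : ℤ) * ((n - 1) * (n - 2) * k) = (n - 1) * (n - 2) * (#W * k) := by ring
    _ ≤ (n - 1) * (n - 2) * |∑ g ∈ W, assignmentSum A C g| :=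
      mul_le_mul_of_nonneg_left (card_mul_le_abs_sum (fun g _ ↦ hlarge g) same_sign)
        card_pairs_nonneg
    _ = |#W * (2 * (∑ q, C x q) * (n * ∑ w, A u w - ∑ v, ∑ w, A v w))| := by
      rw [← average, abs_mul, abs_of_nonneg card_pairs_nonneg]
    _ = #W * (2 * |∑ q, C x q| * |n * ∑ w, A u w - ∑ v, ∑ w, A v w|) := by
      simp only [abs_mul, Nat.abs_cast, Nat.abs_ofNat]

theorem le_of_mul_le_mul_abs_sub {n d t Δ D : ℤ} (hn : 3 ≤ n) (hd₀ : 0 ≤ d) (hdΔ : d ≤ Δ)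
    (hdn : d < n) (ht₀ : 0 ≤ t) (ht : t ≤ 2 * (n - 1))
    (h : (n - 1) * (n - 2) * (Δ + 37) ≤ D * |n * d - t|) : n ≤ D := by
  by_contra! hD
  have abs_lt : |n * d - t| < (n - 2) * (d + 37) := abs_lt.mpr ⟨by nlinarith, by nlinarith⟩
  have : (n - 1) * (n - 2) * (d + 37) ≤ (n - 1) * (n - 2) * (Δ + 37) :=
    mul_le_mul_of_nonneg_left (by linarith) (mul_nonneg (by linarith) (by linarith))
  have : D * |n * d - t| ≤ (n - 1) * |n * d - t| :=
    mul_le_mul_of_nonneg_right (by linarith) (abs_nonneg _)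
  have : (n - 1) * |n * d - t| < (n - 1) * ((n - 2) * (d + 37)) :=
    mul_lt_mul_of_pos_left abs_lt (by linarith)
  linarith

end ConditionalAverage

section SignMatrices

variable {V : Type*} [Fintype V] {F : SimpleGraph V} [DecidableRel F.Adj] {C : Matrix V V ℤ}

theorem abs_assignmentSum_adjMatrix_le (hC₁ : ∀ v w, |C v w| ≤ 1) (g : Perm V) :
    |assignmentSum (F.adjMatrix ℤ) C g| ≤ ∑ v, ∑ w, F.adjMatrix ℤ v w := by
  refine (abs_sum_le_sum_abs _ _).trans (sum_le_sum fun v _ ↦ ?_)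
  simpa using abs_sum_adjMatrix_mul_le (F := F) (fun w ↦ hC₁ (g v) (g w)) v univ

theorem exists_abs_assignmentSum_adjMatrix_le (hC : IsSignMatrix C)
    (hsum : ∑ v, ∑ w, C v w = 0) (hF : F.IsAcyclic) :
    ∃ g : Perm V, |assignmentSum (F.adjMatrix ℤ) C g| ≤ F.maxDegree + 36 := by
  classical
  by_contra! hlarge
  have hlarge (g : Perm V) : (F.maxDegree + 37 : ℤ) ≤ |assignmentSum (F.adjMatrix ℤ) C g| := by
    linarith [Int.add_one_le_iff.mpr (hlarge g)]
  have total_ge := (hlarge 1).trans (abs_assignmentSum_adjMatrix_le hC.abs_le_one 1)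
  obtain hV | hV := isEmpty_or_nonempty V
  · simp only [univ_eq_empty, sum_empty] at total_ge
    lia
  have total_le := sum_sum_adjMatrix_le_of_isAcyclic hF univ_nonempty
  obtain ⟨l, -, hl⟩ := exists_mem_sum_adjMatrix_le_one hF univ_nonempty
  rw [sum_adjMatrix_eq_degree, Nat.cast_le_one] at hl
  obtain ⟨u, hu⟩ := card_le_one_iff_subset_singleton.mp
    (card_signSensitive_le_one hC hsum hF hl hlarge)
  obtain ⟨x, hx⟩ :=
    exists_two_mul_abs_row_sum_lt_card hC.isSymm hC.diag_eq_zero hC.abs_le_one hsum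
  have average := mul_le_abs_row_sum_of_pos_iff (u := u) F.isSymm_adjMatrix (by simp) hC.isSymm
    hC.diag_eq_zero hsum hlarge
    (fun g h hgh ↦ pos_iff_of_eqOn_signSensitive fun v hv ↦ by
      rwa [mem_singleton.mp (hu hv)]) x
  rw [sum_adjMatrix_eq_degree] at average
  rw [card_univ] at total_le
  refine hx.not_ge
    (le_of_mul_le_mul_abs_sub (by lia) (by positivity) ?_ ?_ (by lia) total_le average)
  · exact_mod_cast F.degree_le_maxDegree u
  · exact_mod_cast F.degree_lt_card_verts u

end SignMatrices

section Colourings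

variable {V : Type*} [DecidableEq V]

/-- The colouring `c` of the edges of the complete graph, as a symmetric matrix with zero
diagonal; the values of `c` on loops are ignored. -/
def colourMatrix (c : Sym2 V → ℤ) : Matrix V V ℤ :=
  fun v w ↦ if v = w then 0 else c s(v, w)

variable [Fintype V] {c : Sym2 V → ℤ}

theorem isSignMatrix_colourMatrix
    (hc : ∀ e ∈ (⊤ : SimpleGraph V).edgeFinset, c e = 1 ∨ c e = -1) :
    IsSignMatrix (colourMatrix c) where
  isSymm := Matrix.IsSymm.ext fun v w ↦ by simp only [colourMatrix, eq_comm, Sym2.eq_swap]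
  diag_eq_zero v := if_pos rfl
  eq_one_or_neg_one {v w} hvw := by
    rw [colourMatrix, if_neg hvw]
    exact hc _ (by simpa using hvw)

theorem assignmentSum_colourMatrix (F : SimpleGraph V) [DecidableRel F.Adj] (g : Perm V) :
    assignmentSum (F.adjMatrix ℤ) (colourMatrix c) g =
      2 * ∑ e ∈ F.edgeFinset, c (Sym2.map g e) := by
  rw [← sum_sum_adjMatrix_mul]
  refine sum_congr rfl fun v _ ↦ sum_congr rfl fun w _ ↦ ?_
  obtain rfl | hvw := eq_or_ne v w
  · simp
  · simp [colourMatrix, hvw]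

theorem sum_sum_colourMatrix :
    ∑ v, ∑ w, colourMatrix c v w = 2 * ∑ e ∈ (⊤ : SimpleGraph V).edgeFinset, c e := by
  rw [← sum_sum_adjMatrix_mul]
  refine sum_congr rfl fun v _ ↦ sum_congr rfl fun w _ ↦ ?_
  simp [colourMatrix, SimpleGraph.adjMatrix_apply]

theorem almost_balanced_spanning_forest_general {F : SimpleGraph V} [DecidableRel F.Adj]
    (hF : F.IsAcyclic) (hc : ∀ e ∈ (⊤ : SimpleGraph V).edgeFinset, c e = 1 ∨ c e = -1)
    (hbal : ∑ e ∈ (⊤ : SimpleGraph V).edgeFinset, c e = 0) :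
    ∃ f : V ↪ V,
      |(∑ e ∈ F.edgeFinset, c (Sym2.map f e) : ℝ)| ≤ (F.maxDegree : ℝ) / 2 + 18 := by
  obtain ⟨g, hg⟩ := exists_abs_assignmentSum_adjMatrix_le (isSignMatrix_colourMatrix hc)
    (by rw [sum_sum_colourMatrix, hbal, mul_zero]) hF
  refine ⟨g.toEmbedding, ?_⟩
  rw [assignmentSum_colourMatrix, abs_mul, abs_two] at hg
  have : (2 : ℝ) * |∑ e ∈ F.edgeFinset, (c (Sym2.map g e) : ℝ)| ≤ F.maxDegree + 36 := by
    exact_mod_cast hg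
  rw [Equiv.coe_toEmbedding]
  linarith

end Colourings

/-- If `c` is a balanced `±1`-colouring of the edges of the complete
graph on `n` vertices and `F` is a forest on `n` vertices with maximum degree `Δ`,
then there is a copy `F'` of `F` in `K_n` with `|c(F')| ≤ Δ/2 + 18`. -/
theorem almost_balanced_spanning_forest
    (n : ℕ) (F : SimpleGraph (Fin n)) [DecidableRel F.Adj]
    (hF : F.IsAcyclic) (Δ : ℕ) (hΔ : F.maxDegree = Δ)
    (c : Sym2 (Fin n) → ℤ)
    (hc : ∀ e ∈ (⊤ : SimpleGraph (Fin n)).edgeFinset, c e = 1 ∨ c e = -1)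
    (hbal : ∑ e ∈ (⊤ : SimpleGraph (Fin n)).edgeFinset, c e = 0) :
    ∃ f : Fin n ↪ Fin n,
      |(∑ e ∈ F.edgeFinset, c (Sym2.map (⇑f) e) : ℝ)| ≤ (Δ : ℝ) / 2 + 18 := by
  subst hΔ
  exact almost_balanced_spanning_forest_general hF hc hbal
end

section
/- Let n be an integer, let F be a forest on n vertices with maximum degree Δ satisfying Δ ≥ n/2 or Δ ≤ 15, and let c : E(K_n) → {−1, +1} be a balanced colouring of the edges of K_n. Then there exists a copy F' of F in K_n such that |c(F')| ≤ Δ/2 + 9. -/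
/-!
Identify copies of `F` with permutations of the vertices. Exchanging the images of a leaf and of a
vertex `v` changes the weight of a copy by at most `2 (deg v + 1)`. So, if no copy has small weight,
then all copies that agree outside a set of low-degree vertices have weights of the same sign.

Since the colouring is balanced, the mean weight of a copy is `0`; for bounded `Δ` this already
contradicts the constancy of the sign over all copies. If `2 Δ ≥ n`, let `w` have degree `Δ`. At
most one further vertex `y` has degree much larger than `Δ / 2`, so the sign depends only on the
images of `w` and `y`. Map `w` to a vertex `x` whose two colour classes differ in size by less than
`n / 2`; up to negating the colouring, the first colour is the majority at `x`. Placing as many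
neighbours of `w` as possible along edges of that colour gives a weight of at least `-2`, hence a
positive one, wherever `y` is mapped. So all copies with `w ↦ x` have weight greater than `Δ / 2`,
yet their mean weight is at most `Δ / 2`.
-/

open Finset Equiv

section Permutations

variable {V : Type*} [Fintype V] [DecidableEq V] {S : Finset V} {σ σ₀ τ : Perm V} {u v : V}

/-- The permutations that agree with `σ₀` outside `S`. Read as embeddings of a graph on `V`, they
are the copies in which only the vertices of `S` may be relocated. -/
def permsEqOff (S : Finset V) (σ₀ : Perm V) : Finset (Perm V) := {σ | ∀ v ∉ S, σ v = σ₀ v}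

theorem mem_permsEqOff : σ ∈ permsEqOff S σ₀ ↔ ∀ v ∉ S, σ v = σ₀ v := by
  simp [permsEqOff]

theorem self_mem_permsEqOff (S : Finset V) (σ₀ : Perm V) : σ₀ ∈ permsEqOff S σ₀ :=
  mem_permsEqOff.2 fun _ _ ↦ rfl

theorem mul_swap_mem_permsEqOff (hσ : σ ∈ permsEqOff S σ₀) (hu : u ∈ S) (hv : v ∈ S) :
    σ * swap u v ∈ permsEqOff S σ₀ := by
  refine mem_permsEqOff.2 fun x hx ↦ ?_
  rw [Perm.mul_apply, swap_apply_of_ne_of_ne (by rintro rfl; exact hx hu)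
    (by rintro rfl; exact hx hv), mem_permsEqOff.1 hσ x hx]

theorem of_mem_permsEqOff_of_mul_swap {P : Perm V → Prop} {l : V}
    (hswap : ∀ σ, ∀ v ∈ S, P σ → P (σ * swap l v)) (hτ : τ ∈ permsEqOff S σ) (hσ : P σ) :
    P τ := by
  let M : Submonoid (Perm V) :=
    { carrier := {π | ∀ σ, P σ → P (σ * π)}
      one_mem' := fun σ h ↦ by simpa using h
      mul_mem' := fun {π ρ} hπ hρ σ h ↦ by simpa [mul_assoc] using hρ _ (hπ σ h) }
  have swap_mem (u v : S) : swap (u : V) v ∈ M :=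
    SubmonoidClass.swap_mem_trans M (b := l)
      (by rw [swap_comm]; exact fun σ ↦ hswap σ u u.2) fun σ ↦ hswap σ v v.2
  have ofSubtype_mem (π : Perm S) : Perm.ofSubtype π ∈ M := by
    induction π using Perm.swap_induction_on with
    | one => simp
    | swap_mul π u v _ ih =>
      rw [map_mul, Perm.ofSubtype_swap_eq]
      exact M.mul_mem (swap_mem u v) ih
  have fixes_off (x : V) (hx : x ∉ S) : (σ⁻¹ * τ) x = x := by
    simp [mem_permsEqOff.1 hτ x hx]
  have hπ : σ⁻¹ * τ ∈ M := by
    rw [← Perm.ofSubtype_subtypePerm (p := (· ∈ S)) (f := σ⁻¹ * τ)]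
    · exact ofSubtype_mem _
    · exact fun x ↦ ⟨fun h ↦ by_contra fun hx ↦ hx (fixes_off x hx ▸ h), fun hx ↦
        by_contra fun h ↦ h (((σ⁻¹ * τ).injective (fixes_off _ h)).symm ▸ hx)⟩
    · exact fun x hx ↦ by_contra fun h ↦ hx (fixes_off x h)
  simpa using hπ σ hσ

theorem exists_mem_permsEqOff_forall_or_forall_not (S N : Finset V) (σ₀ : Perm V) (P : V → Prop) :
    ∃ σ ∈ permsEqOff S σ₀, (∀ v ∈ S, v ∈ N → P (σ v)) ∨ ∀ v ∈ S, v ∉ N → ¬ P (σ v) := by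
  classical
  obtain ⟨σ, hσ, hmax⟩ := exists_max_image (permsEqOff S σ₀) (fun σ ↦ #{v ∈ N | P (σ v)})
    ⟨σ₀, self_mem_permsEqOff S σ₀⟩
  refine ⟨σ, hσ, ?_⟩
  by_contra! ⟨⟨v, hvS, hvN, hv⟩, u, huS, huN, hu⟩
  refine (hmax _ (mul_swap_mem_permsEqOff hσ huS hvS)).not_gt (card_lt_card ?_)
  refine (ssubset_iff_of_subset fun x hx ↦ ?_).2
    ⟨v, mem_filter.2 ⟨hvN, by simpa using hu⟩, by simp [hv]⟩
  obtain ⟨hxN, hPx⟩ := mem_filter.1 hx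
  have hxu : x ≠ u := by rintro rfl; exact huN hxN
  have hxv : x ≠ v := by rintro rfl; exact hv hPx
  exact mem_filter.2 ⟨hxN, by simpa [swap_apply_of_ne_of_ne hxu hxv] using hPx⟩

end Permutations

section Graphs

variable {V : Type*} [Fintype V] (F : SimpleGraph V) [DecidableRel F.Adj]

theorem sum_incidenceFinset_eq_sum_neighborFinset [DecidableEq V] {M : Type*}
    [AddCommMonoid M] (g : Sym2 V → M) (w : V) :
    ∑ e ∈ F.incidenceFinset w, g e = ∑ v ∈ F.neighborFinset w, g s(w, v) := by
  have image_eq : F.incidenceFinset w = (F.neighborFinset w).image (s(w, ·)) := by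
    ext e
    induction e with
    | _ x y => simp [SimpleGraph.incidenceSet]; grind [SimpleGraph.adj_comm]
  rw [image_eq, sum_image]
  simp

theorem sum_edgeFinset_eq_sum_neighborFinset_add [DecidableEq V] {M : Type*}
    [AddCommMonoid M] (g : Sym2 V → M) (w : V) :
    ∑ e ∈ F.edgeFinset, g e =
      ∑ v ∈ F.neighborFinset w, g s(w, v) + ∑ e ∈ F.edgeFinset \ F.incidenceFinset w, g e := by
  rw [← sum_incidenceFinset_eq_sum_neighborFinset, add_comm,
    sum_sdiff (F.incidenceFinset_subset w)]

theorem sum_sum_neighborFinset_eq_two_nsmul_sum_edgeFinset {M : Type*} [AddCommMonoid M]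
    (g : Sym2 V → M) :
    ∑ w, ∑ v ∈ F.neighborFinset w, g s(w, v) = 2 • ∑ e ∈ F.edgeFinset, g e := by
  classical
  simp_rw [← sum_incidenceFinset_eq_sum_neighborFinset, F.incidenceFinset_eq_filter, sum_filter]
  rw [sum_comm, smul_sum]
  refine sum_congr rfl fun e he ↦ ?_
  have hcard : #{v | v ∈ e} = 2 := by
    rw [← Sym2.card_toFinset_of_not_isDiag e
      (F.not_isDiag_of_mem_edgeSet (SimpleGraph.mem_edgeFinset.1 he))]
    congr 1
    ext
    simp
  rw [← sum_filter, sum_const, hcard]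

theorem card_edgeFinset_le_card_sub_one_of_isAcyclic (hF : F.IsAcyclic) :
    #F.edgeFinset ≤ Fintype.card V - 1 := by
  classical
  cases isEmpty_or_nonempty V
  · simp [Finset.eq_empty_of_isEmpty]
  obtain ⟨T, hFT, -, hT⟩ :=
    SimpleGraph.connected_top.exists_isTree_le_of_le_of_isAcyclic (le_top : F ≤ ⊤) hF
  have hFT_card := card_le_card (SimpleGraph.edgeFinset_mono hFT)
  have hT_card := hT.card_edgeFinset
  lia

theorem sum_degree_le_card_edgeFinset_add_choose (T : Finset V) :
    ∑ v ∈ T, F.degree v ≤ #F.edgeFinset + (#T).choose 2 := by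
  classical
  have hcard (e) (he : e ∈ F.edgeFinset) :
      #{v ∈ T | v ∈ e} ≤ 1 + if e ∈ T.offDiag.image Sym2.mk.uncurry then 1 else 0 := by
    split_ifs with h
    · calc #{v ∈ T | v ∈ e} ≤ #e.toFinset := card_le_card fun v ↦ by simp
        _ = 1 + 1 := Sym2.card_toFinset_of_not_isDiag e
          (F.not_isDiag_of_mem_edgeSet (SimpleGraph.mem_edgeFinset.1 he))
    · refine card_le_one.2 fun u hu v hv ↦ by_contra fun huv ↦ h ?_
      obtain ⟨⟨huT, hue⟩, hvT, hve⟩ := And.intro (mem_filter.1 hu) (mem_filter.1 hv)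
      exact mem_image.2 ⟨(u, v), mem_offDiag.2 ⟨huT, hvT, huv⟩,
        ((Sym2.mem_and_mem_iff huv).1 ⟨hue, hve⟩).symm⟩
  calc ∑ v ∈ T, F.degree v = ∑ v ∈ T, ∑ e ∈ F.edgeFinset, if v ∈ e then 1 else 0 := by
        simp [← SimpleGraph.card_incidenceFinset_eq_degree, F.incidenceFinset_eq_filter]
    _ = ∑ e ∈ F.edgeFinset, #{v ∈ T | v ∈ e} := by
        rw [sum_comm]; simp
    _ ≤ _ := sum_le_sum hcard
    _ ≤ _ := by
        rw [sum_add_distrib, ← card_eq_sum_ones, ← card_filter, ← Sym2.card_image_offDiag]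
        gcongr
        exact fun e he ↦ (mem_filter.1 he).2

theorem exists_degree_le_one (hF : #F.edgeFinset < Fintype.card V) : ∃ l, F.degree l ≤ 1 := by
  by_contra! h
  have hsum := card_nsmul_le_sum univ (F.degree ·) 2 fun v _ ↦ h v
  rw [F.sum_degrees_eq_twice_card_edges, card_univ, smul_eq_mul] at hsum
  lia

theorem exists_forall_ne_two_mul_degree_le (hF : #F.edgeFinset < Fintype.card V) {w : V}
    (hw : Fintype.card V ≤ 2 * F.degree w) :
    ∃ y, ∀ v, v ≠ w → v ≠ y → 2 * F.degree v ≤ F.degree w + 2 := by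
  classical
  by_cases! h : ∃ y ≠ w, F.degree w + 2 < 2 * F.degree y
  · obtain ⟨y, hyw, hy⟩ := h
    refine ⟨y, fun v hvw hvy ↦ ?_⟩
    have hsum := sum_degree_le_card_edgeFinset_add_choose F {w, y, v}
    rw [sum_insert (by simp [hyw.symm, hvw.symm]), sum_pair hvy.symm,
      card_eq_three.2 ⟨w, y, v, hyw.symm, hvw.symm, hvy.symm, rfl⟩] at hsum
    norm_num [Nat.choose] at hsum
    lia
  · exact ⟨w, fun v hv _ ↦ h v hv⟩

end Graphs

section PairSums

variable {V : Type*} [DecidableEq V]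

/-- The sum of `c` over the ordered pairs of distinct elements of `S`, that is, twice the weight of
the complete graph on `S`. -/
def pairSum (c : Sym2 V → ℤ) (S : Finset V) : ℤ := ∑ x ∈ S, ∑ y ∈ S.erase x, c s(x, y)

theorem pairSum_map (c : Sym2 V → ℤ) (S : Finset V) (σ : Perm V) :
    pairSum c (S.map σ.toEmbedding) = pairSum (fun e ↦ c (e.map σ)) S := by
  simp only [pairSum, sum_map]
  refine sum_congr rfl fun x _ ↦ ?_
  rw [← map_erase, sum_map]
  simp

end PairSums

section Averaging

variable {V : Type*} [Fintype V] [DecidableEq V] {S : Finset V} {σ σ₀ : Perm V} {u v : V}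

theorem map_eq_map_of_mem_permsEqOff (hσ : σ ∈ permsEqOff S σ₀) :
    S.map σ.toEmbedding = S.map σ₀.toEmbedding := by
  refine eq_of_subset_of_card_le (fun x hx ↦ ?_) (by simp)
  obtain ⟨v, hv, rfl⟩ := mem_map.1 hx
  refine mem_map_equiv.2 (by_contra fun h ↦ h ?_)
  have hσ' : σ (σ₀.symm (σ v)) = σ v := (mem_permsEqOff.1 hσ _ h).trans (by simp)
  simpa [σ.injective hσ'] using hv

theorem map_univ_erase (σ : Perm V) (w : V) :
    (univ.erase w).map σ.toEmbedding = univ.erase (σ w) := by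
  simp [map_erase]

theorem sum_permsEqOff_mul_swap (Φ : Perm V → ℤ) (hu : u ∈ S) (hv : v ∈ S) :
    ∑ σ ∈ permsEqOff S σ₀, Φ (σ * swap u v) = ∑ σ ∈ permsEqOff S σ₀, Φ σ :=
  sum_nbij' (· * swap u v) (· * swap u v) (fun _ hσ ↦ mul_swap_mem_permsEqOff hσ hu hv)
    (fun _ hσ ↦ mul_swap_mem_permsEqOff hσ hu hv) (by simp) (by simp) (by simp)

theorem card_mul_sum_permsEqOff_apply (f : V → ℤ) (hu : u ∈ S) :
    #S * ∑ σ ∈ permsEqOff S σ₀, f (σ u) =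
      #(permsEqOff S σ₀) * ∑ x ∈ S.map σ₀.toEmbedding, f x := by
  have sum_eq (v) (hv : v ∈ S) :
      ∑ σ ∈ permsEqOff S σ₀, f (σ v) = ∑ σ ∈ permsEqOff S σ₀, f (σ u) := by
    rw [← sum_permsEqOff_mul_swap (fun σ ↦ f (σ v)) hu hv]
    simp
  calc #S * ∑ σ ∈ permsEqOff S σ₀, f (σ u)
      = ∑ v ∈ S, ∑ σ ∈ permsEqOff S σ₀, f (σ v) := by
        rw [sum_congr rfl sum_eq, sum_const, nsmul_eq_mul]
    _ = ∑ σ ∈ permsEqOff S σ₀, ∑ x ∈ S.map σ.toEmbedding, f x := by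
        rw [sum_comm]
        simp
    _ = #(permsEqOff S σ₀) * ∑ x ∈ S.map σ₀.toEmbedding, f x := by
        rw [sum_congr rfl fun σ hσ ↦ by rw [map_eq_map_of_mem_permsEqOff hσ], sum_const,
          nsmul_eq_mul]

theorem card_mul_card_sub_one_mul_sum_permsEqOff_map (c : Sym2 V → ℤ) (huv : u ≠ v)
    (hu : u ∈ S) (hv : v ∈ S) :
    #S * (#S - 1) * ∑ σ ∈ permsEqOff S σ₀, c (s(u, v).map σ) =
      #(permsEqOff S σ₀) * pairSum c (S.map σ₀.toEmbedding) := by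
  let p (e : Sym2 V) : ℤ := ∑ σ ∈ permsEqOff S σ₀, c (e.map σ)
  have move (x y z) (hy : y ∈ S) (hz : z ∈ S) (hxy : x ≠ y) (hxz : x ≠ z) :
      p s(x, y) = p s(x, z) := by
    simp only [p]
    rw [← sum_permsEqOff_mul_swap (fun σ ↦ c (s(x, y).map σ)) hy hz]
    simp [swap_apply_of_ne_of_ne hxy hxz]
  have p_eq (x) (hx : x ∈ S) (y) (hy : y ∈ S.erase x) : p s(x, y) = p s(u, v) := by
    obtain ⟨hyx, hyS⟩ := mem_erase.1 hy
    obtain rfl | hyu := eq_or_ne y u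
    · rw [Sym2.eq_swap, move y x v hx hv hyx huv]
    · rw [Sym2.eq_swap, move y x u hx hu hyx hyu, Sym2.eq_swap, move u y v hyS hv hyu.symm huv]
  calc #S * (#S - 1) * p s(u, v)
      = ∑ x ∈ S, ∑ y ∈ S.erase x, p s(x, y) := by
        rw [sum_congr rfl fun x hx ↦ sum_congr rfl (p_eq x hx)]
        simp only [sum_const, nsmul_eq_mul]
        rw [sum_congr rfl fun x hx ↦ by rw [cast_card_erase_of_mem hx], sum_const, nsmul_eq_mul,
          mul_assoc]
    _ = ∑ σ ∈ permsEqOff S σ₀, pairSum c (S.map σ.toEmbedding) := by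
        simp_rw [pairSum_map, pairSum]
        rw [sum_comm (s := permsEqOff S σ₀)]
        exact sum_congr rfl fun x _ ↦ sum_comm
    _ = #(permsEqOff S σ₀) * pairSum c (S.map σ₀.toEmbedding) := by
        rw [sum_congr rfl fun σ hσ ↦ by rw [map_eq_map_of_mem_permsEqOff hσ], sum_const,
          nsmul_eq_mul]

theorem sum_permsEqOff_map_nonpos {c : Sym2 V → ℤ}
    (hpair : pairSum c (S.map σ₀.toEmbedding) ≤ 0) (huv : u ≠ v) (hu : u ∈ S) (hv : v ∈ S) :
    ∑ σ ∈ permsEqOff S σ₀, c (s(u, v).map σ) ≤ 0 := by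
  have hcard : 1 < #S := one_lt_card.2 ⟨u, hu, v, hv, huv⟩
  have hpos : 0 < (#S * (#S - 1) : ℤ) := mul_pos (by lia) (by lia)
  refine nonpos_of_mul_nonpos_right ?_ hpos
  rw [card_mul_card_sub_one_mul_sum_permsEqOff_map c huv hu hv]
  exact mul_nonpos_of_nonneg_of_nonpos (by positivity) hpair

end Averaging

section SignedDegrees

variable {V : Type*} [Fintype V] [DecidableEq V] {c : Sym2 V → ℤ}

/-- The sum of the colours of the edges of the complete graph at `x`: the number of edges at `x`
coloured `1` minus the number of those coloured `-1`. -/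
def signedDegree (c : Sym2 V → ℤ) (x : V) : ℤ := ∑ y ∈ univ.erase x, c s(x, y)

theorem signedDegree_neg (c : Sym2 V → ℤ) (x : V) : signedDegree (-c) x = -signedDegree c x := by
  simp [signedDegree]

theorem signedDegree_apply (c : Sym2 V → ℤ) (σ : Perm V) (w : V) :
    signedDegree c (σ w) = ∑ v ∈ univ.erase w, c s(σ w, σ v) := by
  rw [signedDegree, ← map_univ_erase, sum_map]
  simp

theorem card_sub_one_mul_sum_permsEqOff_erase (c : Sym2 V → ℤ) (σ₀ : Perm V) {v w : V}
    (hvw : v ≠ w) :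
    (Fintype.card V - 1) * ∑ σ ∈ permsEqOff (univ.erase w) σ₀, c s(σ w, σ v) =
      #(permsEqOff (univ.erase w) σ₀) * signedDegree c (σ₀ w) := by
  have hcard : (#(univ.erase w) : ℤ) = Fintype.card V - 1 := by
    rw [cast_card_erase_of_mem (mem_univ w), card_univ]
  rw [sum_congr rfl fun σ hσ ↦ by rw [mem_permsEqOff.1 hσ w (notMem_erase w univ)], ← hcard,
    card_mul_sum_permsEqOff_apply (fun z ↦ c s(σ₀ w, z)) (mem_erase.2 ⟨hvw, mem_univ v⟩),
    map_univ_erase, signedDegree]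

theorem sum_signedDegree_eq_zero (hbal : ∑ e ∈ (⊤ : SimpleGraph V).edgeFinset, c e = 0) :
    ∑ x, signedDegree c x = 0 := by
  have hsum := sum_sum_neighborFinset_eq_two_nsmul_sum_edgeFinset (⊤ : SimpleGraph V) c
  rw [hbal, smul_zero] at hsum
  simpa [signedDegree, ← compl_singleton] using hsum

theorem sum_signedDegree_eq_pairSum_add (c : Sym2 V → ℤ) (P : Finset V) :
    ∑ x ∈ P, signedDegree c x = pairSum c P + ∑ x ∈ P, ∑ y ∈ Pᶜ, c s(x, y) := by
  rw [pairSum, ← sum_add_distrib]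
  refine sum_congr rfl fun x hx ↦ ?_
  have hdisj : Disjoint (P.erase x) Pᶜ := disjoint_compl_right.mono_left (erase_subset x P)
  rw [signedDegree, ← sum_union hdisj]
  congr 1
  grind [mem_compl]

theorem sum_signedDegree_sub_sum_compl_eq (c : Sym2 V → ℤ) (P : Finset V) :
    ∑ x ∈ P, signedDegree c x - ∑ x ∈ Pᶜ, signedDegree c x = pairSum c P - pairSum c Pᶜ := by
  have hcross : ∑ x ∈ P, ∑ y ∈ Pᶜ, c s(x, y) = ∑ x ∈ Pᶜ, ∑ y ∈ P, c s(x, y) := by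
    rw [sum_comm]
    simp_rw [Sym2.eq_swap]
  rw [sum_signedDegree_eq_pairSum_add, sum_signedDegree_eq_pairSum_add, compl_compl, hcross]
  ring

theorem pairSum_univ (c : Sym2 V → ℤ) : pairSum c univ = ∑ x, signedDegree c x := rfl

theorem pairSum_erase_of_sum_signedDegree_eq_zero (hc : ∑ x, signedDegree c x = 0) (x : V) :
    pairSum c (univ.erase x) = -2 * signedDegree c x := by
  have hsub := sum_signedDegree_sub_sum_compl_eq c {x}
  have hadd := sum_add_sum_compl {x} (signedDegree c)
  simp only [pairSum, sum_singleton, erase_singleton, sum_empty, compl_singleton] at *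
  linarith

/-- `c` takes the values `1` and `-1` on the edges of the complete graph; its values on the diagonal
of `Sym2 V` are arbitrary. -/
def IsSignColouring (c : Sym2 V → ℤ) : Prop :=
  ∀ e ∈ (⊤ : SimpleGraph V).edgeFinset, c e = 1 ∨ c e = -1

namespace IsSignColouring

theorem neg (hc : IsSignColouring c) : IsSignColouring (-c) := fun e he ↦ by
  have := hc e he
  simp only [Pi.neg_apply]
  lia

theorem apply_mk (hc : IsSignColouring c) {x y : V} (hxy : x ≠ y) :
    c s(x, y) = 1 ∨ c s(x, y) = -1 :=
  hc _ (by simpa using hxy)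

theorem abs_map_le_one (hc : IsSignColouring c) {F : SimpleGraph V} [DecidableRel F.Adj]
    {e : Sym2 V} (he : e ∈ F.edgeFinset) (σ : Perm V) : |c (e.map σ)| ≤ 1 := by
  induction e with
  | _ x y =>
    have hxy : x ≠ y := (SimpleGraph.mem_edgeFinset.1 he).ne
    obtain h | h := hc.apply_mk (σ.injective.ne hxy) <;> simp [h]

theorem abs_pairSum_le (hc : IsSignColouring c) (S : Finset V) :
    |pairSum c S| ≤ #S * (#S - 1) := by
  calc |pairSum c S| ≤ ∑ x ∈ S, ∑ y ∈ S.erase x, |c s(x, y)| :=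
        (abs_sum_le_sum_abs _ _).trans (sum_le_sum fun x _ ↦ abs_sum_le_sum_abs _ _)
    _ ≤ ∑ x ∈ S, ∑ y ∈ S.erase x, 1 := by
        gcongr with x _ y hy
        obtain h | h := hc.apply_mk (ne_of_mem_erase hy).symm <;> simp [h]
    _ = #S * (#S - 1) := by
        simp only [sum_const, nsmul_eq_mul, mul_one]
        rw [sum_congr rfl fun x hx ↦ cast_card_erase_of_mem hx, sum_const, nsmul_eq_mul]

theorem exists_two_mul_abs_signedDegree_lt [Nonempty V] (hc : IsSignColouring c)
    (hbal : ∑ x, signedDegree c x = 0) : ∃ x, 2 * |signedDegree c x| < Fintype.card V := by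
  by_contra! h
  set P : Finset V := {x | 0 ≤ signedDegree c x}
  have hcard : (#P + #Pᶜ : ℤ) = Fintype.card V := mod_cast card_add_card_compl P
  have hpos : 0 < (Fintype.card V : ℤ) := mod_cast Fintype.card_pos
  have hP : #P * (Fintype.card V : ℤ) ≤ 2 * ∑ x ∈ P, signedDegree c x := by
    rw [mul_sum, ← nsmul_eq_mul]
    refine card_nsmul_le_sum _ _ _ fun x hx ↦ ?_
    simpa [abs_of_nonneg (mem_filter.1 hx).2] using h x
  have hPc : #Pᶜ * (Fintype.card V : ℤ) ≤ -2 * ∑ x ∈ Pᶜ, signedDegree c x := by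
    rw [mul_sum, ← nsmul_eq_mul]
    refine card_nsmul_le_sum _ _ _ fun x hx ↦ ?_
    have hx : signedDegree c x < 0 := by simpa [P] using hx
    simpa [abs_of_neg hx] using h x
  have hupper : 2 * ∑ x ∈ P, signedDegree c x ≤ #P * (#P - 1) + #Pᶜ * (#Pᶜ - 1) := by
    have hsub := sum_signedDegree_sub_sum_compl_eq c P
    have hadd := sum_add_sum_compl P (signedDegree c)
    have hpairP := (abs_le.1 (hc.abs_pairSum_le P)).2
    have hpairPc := (abs_le.1 (hc.abs_pairSum_le Pᶜ)).1
    linarith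
  have hcompl : ∑ x ∈ Pᶜ, signedDegree c x = -∑ x ∈ P, signedDegree c x := by
    linarith [sum_add_sum_compl P (signedDegree c)]
  rw [hcompl] at hPc
  rw [← hcard] at hP hPc hpos
  obtain hle | hle := le_total #P #Pᶜ <;> zify at hle <;> nlinarith

end IsSignColouring

end SignedDegrees

theorem card_sub_two_le_sum {ι : Type*} {T : Finset ι} {f : ι → ℤ} {y : ι}
    (hf : ∀ i ∈ T, -1 ≤ f i) (hone : ∀ i ∈ T, i ≠ y → f i = 1) : #T - 2 ≤ ∑ i ∈ T, f i := by
  classical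
  have herase : ∑ i ∈ T.erase y, f i = #(T.erase y) := by
    rw [sum_congr rfl fun i hi ↦ hone i (mem_of_mem_erase hi) (ne_of_mem_erase hi)]
    simp
  by_cases hy : y ∈ T
  · rw [← add_sum_erase T f hy, herase, cast_card_erase_of_mem hy]
    linarith [hf y hy]
  · rw [erase_eq_of_notMem hy] at herase
    linarith

section Copies

variable {V : Type*} [Fintype V] (F : SimpleGraph V) [DecidableRel F.Adj]

/-- The weight `c(F')` of the copy `F'` of `F` in which `σ v` plays the role of `v`. -/
def copyWeight (c : Sym2 V → ℤ) (σ : Perm V) : ℤ := ∑ e ∈ F.edgeFinset, c (e.map σ)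

theorem copyWeight_neg (c : Sym2 V → ℤ) (σ : Perm V) :
    copyWeight F (-c) σ = -copyWeight F c σ := by
  simp [copyWeight]

variable [DecidableEq V] {c : Sym2 V → ℤ} {S : Finset V} {σ τ : Perm V} {l w x : V}

theorem copyWeight_eq_sum_neighborFinset_add (c : Sym2 V → ℤ) (σ : Perm V) (w : V) :
    copyWeight F c σ = ∑ v ∈ F.neighborFinset w, c s(σ w, σ v) +
      ∑ e ∈ F.edgeFinset \ F.incidenceFinset w, c (e.map σ) :=
  sum_edgeFinset_eq_sum_neighborFinset_add F (fun e ↦ c (e.map σ)) w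

theorem abs_copyWeight_mul_swap_sub_le (hc : IsSignColouring c) (σ : Perm V) (u v : V) :
    |copyWeight F c (σ * swap u v) - copyWeight F c σ| ≤ 2 * (F.degree u + F.degree v) := by
  let I := F.incidenceFinset u ∪ F.incidenceFinset v
  have hI : I ⊆ F.edgeFinset :=
    union_subset (F.incidenceFinset_subset u) (F.incidenceFinset_subset v)
  have hoff (e) (he : e ∈ F.edgeFinset) (heI : e ∉ I) :
      c (e.map (σ * swap u v)) - c (e.map σ) = 0 := by
    simp only [I, F.incidenceFinset_eq_filter, mem_union, mem_filter, he, true_and, not_or] at heI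
    rw [Sym2.map_congr fun x hx ↦ ?_, sub_self]
    rw [Perm.mul_apply, swap_apply_of_ne_of_ne (by rintro rfl; exact heI.1 hx)
      (by rintro rfl; exact heI.2 hx)]
  calc |copyWeight F c (σ * swap u v) - copyWeight F c σ|
      = |∑ e ∈ I, (c (e.map (σ * swap u v)) - c (e.map σ))| := by
        rw [copyWeight, copyWeight, ← sum_sub_distrib, sum_subset hI hoff]
    _ ≤ #I • (2 : ℤ) := by
        refine (abs_sum_le_sum_abs _ _).trans (sum_le_card_nsmul _ _ _ fun e he ↦ ?_)
        linarith [abs_sub (c (e.map (σ * swap u v))) (c (e.map σ)),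
          hc.abs_map_le_one (hI he) (σ * swap u v), hc.abs_map_le_one (hI he) σ]
    _ ≤ 2 * (F.degree u + F.degree v) := by
        have hcard : #I ≤ F.degree u + F.degree v := by
          simpa only [F.card_incidenceFinset_eq_degree] using
            card_union_le (F.incidenceFinset u) (F.incidenceFinset v)
        rw [nsmul_eq_mul]
        lia

theorem copyWeight_pos_of_mem_permsEqOff (hc : IsSignColouring c)
    (hlarge : ∀ σ, ∀ v ∈ S, F.degree l + F.degree v < |copyWeight F c σ|)
    (hτ : τ ∈ permsEqOff S σ) (hσ : 0 < copyWeight F c σ) : 0 < copyWeight F c τ := by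
  refine of_mem_permsEqOff_of_mul_swap (P := fun σ ↦ 0 < copyWeight F c σ) (l := l)
    (fun σ v hv hσ ↦ ?_) hτ hσ
  have hswap := abs_copyWeight_mul_swap_sub_le F hc σ l v
  have hσ' := hlarge σ v hv
  have hswap' := hlarge (σ * swap l v) v hv
  grind

theorem sum_neighborFinset_sub_le_copyWeight (hc : IsSignColouring c) (σ : Perm V) (w : V) :
    ∑ v ∈ F.neighborFinset w, c s(σ w, σ v) - (#F.edgeFinset - F.degree w) ≤
      copyWeight F c σ := by
  have hrest : -(#F.edgeFinset - F.degree w : ℤ) ≤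
      ∑ e ∈ F.edgeFinset \ F.incidenceFinset w, c (e.map σ) := by
    rw [← F.card_incidenceFinset_eq_degree, ← cast_card_sdiff (F.incidenceFinset_subset w)]
    have hle := card_nsmul_le_sum (F.edgeFinset \ F.incidenceFinset w) (fun e ↦ c (e.map σ)) (-1)
      fun e he ↦ (abs_le.1 (hc.abs_map_le_one (mem_sdiff.1 he).1 σ)).1
    simpa using hle
  rw [copyWeight_eq_sum_neighborFinset_add F c σ w]
  linarith

theorem exists_mem_permsEqOff_neg_two_le_copyWeight (hc : IsSignColouring c)
    (hF : #F.edgeFinset < Fintype.card V) (hw : Fintype.card V ≤ 2 * F.degree w) (y : V)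
    (σ₀ : Perm V) (hσ₀ : 0 ≤ signedDegree c (σ₀ w)) :
    ∃ σ ∈ permsEqOff {w, y}ᶜ σ₀, -2 ≤ copyWeight F c σ := by
  obtain ⟨σ, hσ, hor⟩ := exists_mem_permsEqOff_forall_or_forall_not {w, y}ᶜ (F.neighborFinset w)
    σ₀ (fun z ↦ c s(σ₀ w, z) = 1)
  refine ⟨σ, hσ, ?_⟩
  rw [← mem_permsEqOff.1 hσ w (by simp)] at hσ₀ hor
  have hsign {v} (hv : v ≠ w) : c s(σ w, σ v) = 1 ∨ c s(σ w, σ v) = -1 :=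
    hc.apply_mk (σ.injective.ne hv.symm)
  have hmem {v} (hvw : v ≠ w) (hvy : v ≠ y) : v ∈ ({w, y} : Finset V)ᶜ := by simp [hvw, hvy]
  have hne {v} (hv : v ∈ F.neighborFinset w) : v ≠ w := ((F.mem_neighborFinset w v).1 hv).ne'
  have hstar := sum_neighborFinset_sub_le_copyWeight F hc σ w
  obtain hnbr | hnonnbr := hor
  · have hsum := card_sub_two_le_sum (T := F.neighborFinset w) (f := fun v ↦ c s(σ w, σ v)) (y := y)
      (fun v hv ↦ by have := hsign (hne hv); lia)
      (fun v hv hvy ↦ hnbr v (hmem (hne hv) hvy) hv)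
    rw [F.card_neighborFinset_eq_degree] at hsum
    lia
  · have hsum := card_sub_two_le_sum (T := univ.erase w \ F.neighborFinset w)
      (f := fun v ↦ -c s(σ w, σ v)) (y := y)
      (fun v hv ↦ by have := hsign (v := v) (by grind); lia)
      (fun v hv hvy ↦ by
        have hvw : v ≠ w := by grind
        have := hsign hvw
        have := hnonnbr v (hmem hvw hvy) (mem_sdiff.1 hv).2
        lia)
    have hsub : F.neighborFinset w ⊆ univ.erase w := fun v hv ↦ by simpa using hne hv
    rw [signedDegree_apply, ← sum_sdiff hsub] at hσ₀
    rw [sum_neg_distrib, cast_card_sdiff hsub, cast_card_erase_of_mem (mem_univ w), card_univ,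
      F.card_neighborFinset_eq_degree] at hsum
    lia

theorem exists_copyWeight_nonpos (hbal : ∑ x, signedDegree c x = 0) :
    ∃ σ, copyWeight F c σ ≤ 0 := by
  suffices hsum : ∑ σ ∈ permsEqOff univ 1, copyWeight F c σ ≤ 0 by
    obtain ⟨σ, -, hσ⟩ := exists_le_of_sum_le (g := fun _ ↦ 0) ⟨1, self_mem_permsEqOff univ 1⟩
      (hsum.trans_eq sum_const_zero.symm)
    exact ⟨σ, hσ⟩
  simp only [copyWeight]
  rw [sum_comm]
  refine sum_nonpos fun e he ↦ ?_
  induction e with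
  | _ u v =>
    refine sum_permsEqOff_map_nonpos ?_ (SimpleGraph.mem_edgeFinset.1 he).ne (mem_univ u)
      (mem_univ v)
    rw [map_univ_equiv, pairSum_univ, hbal]

theorem card_sub_one_mul_sum_copyWeight_le (hbal : ∑ x, signedDegree c x = 0) (σ₀ : Perm V)
    (hσ₀ : 0 ≤ signedDegree c (σ₀ w)) :
    (Fintype.card V - 1) * ∑ σ ∈ permsEqOff (univ.erase w) σ₀, copyWeight F c σ ≤
      #(permsEqOff (univ.erase w) σ₀) * (F.degree w * signedDegree c (σ₀ w)) := by
  have hstar : (Fintype.card V - 1) * ∑ v ∈ F.neighborFinset w,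
      ∑ σ ∈ permsEqOff (univ.erase w) σ₀, c s(σ w, σ v) =
        F.degree w * (#(permsEqOff (univ.erase w) σ₀) * signedDegree c (σ₀ w)) := by
    rw [mul_sum, sum_congr rfl fun v hv ↦ card_sub_one_mul_sum_permsEqOff_erase c σ₀
      ((F.mem_neighborFinset w v).1 hv).ne', sum_const, F.card_neighborFinset_eq_degree,
      nsmul_eq_mul]
  have hrest : ∑ e ∈ F.edgeFinset \ F.incidenceFinset w,
      ∑ σ ∈ permsEqOff (univ.erase w) σ₀, c (e.map σ) ≤ 0 := by
    refine sum_nonpos fun e he ↦ ?_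
    induction e with
    | _ u v =>
      obtain ⟨huv, hw⟩ : F.Adj u v ∧ (F.Adj u v → ¬ w = u ∧ ¬ w = v) := by
        simpa [F.incidenceFinset_eq_filter] using he
      refine sum_permsEqOff_map_nonpos ?_ huv.ne (by grind) (by grind)
      rw [map_univ_erase, pairSum_erase_of_sum_signedDegree_eq_zero hbal]
      linarith
  have hcard : 0 ≤ (Fintype.card V - 1 : ℤ) := by
    have := Fintype.card_pos_iff.2 ⟨w⟩
    lia
  simp_rw [copyWeight_eq_sum_neighborFinset_add F c _ w]
  rw [sum_add_distrib, sum_comm, sum_comm (s := permsEqOff _ _), mul_add, hstar]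
  linarith [mul_nonpos_of_nonneg_of_nonpos hcard hrest]

theorem exists_apply_eq_and_mul_copyWeight_le (hbal : ∑ x, signedDegree c x = 0)
    (hx : 0 ≤ signedDegree c x) (w : V) :
    ∃ σ : Perm V, σ w = x ∧
      (Fintype.card V - 1) * copyWeight F c σ ≤ F.degree w * signedDegree c x := by
  have hswap : swap w x w = x := swap_apply_left w x
  have hmean := card_sub_one_mul_sum_copyWeight_le F hbal (swap w x) (hswap.symm ▸ hx)
  rw [mul_sum, ← nsmul_eq_mul, ← sum_const, hswap] at hmean
  obtain ⟨σ, hσ, hle⟩ := exists_le_of_sum_le ⟨_, self_mem_permsEqOff _ _⟩ hmean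
  exact ⟨σ, (mem_permsEqOff.1 hσ w (notMem_erase w univ)).trans hswap, hle⟩

theorem exists_abs_copyWeight_le (hc : IsSignColouring c)
    (hbal : ∑ x, signedDegree c x = 0) (hF : #F.edgeFinset < Fintype.card V) :
    ∃ σ, |copyWeight F c σ| ≤ F.maxDegree + 1 := by
  by_contra! h
  obtain ⟨l, hl⟩ := exists_degree_le_one F hF
  have hlarge (σ) (v) (_ : v ∈ univ) : F.degree l + F.degree v < |copyWeight F c σ| := by
    have := F.degree_le_maxDegree v
    have := h σ
    lia
  obtain ⟨σ, hσ⟩ := exists_copyWeight_nonpos F hbal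
  obtain ⟨τ, hτ⟩ := exists_copyWeight_nonpos F (c := -c) (by simp [signedDegree_neg, hbal])
  rw [copyWeight_neg, neg_nonpos] at hτ
  have hτpos : 0 < copyWeight F c τ := by
    have := h τ
    rw [abs_of_nonneg hτ] at this
    lia
  have hσpos : 0 < copyWeight F c σ :=
    copyWeight_pos_of_mem_permsEqOff F hc hlarge (by simp [mem_permsEqOff]) hτpos
  exact hσpos.not_ge hσ

theorem exists_two_mul_abs_copyWeight_le (hc : IsSignColouring c)
    (hbal : ∑ x, signedDegree c x = 0) (hF : #F.edgeFinset < Fintype.card V)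
    (hdeg : Fintype.card V ≤ 2 * F.maxDegree) :
    ∃ σ, 2 * |copyWeight F c σ| ≤ F.maxDegree + 4 := by
  have : Nonempty V := Fintype.card_pos_iff.1 (by lia)
  obtain ⟨x, hx⟩ := hc.exists_two_mul_abs_signedDegree_lt hbal
  wlog hnonneg : 0 ≤ signedDegree c x generalizing c
  · simpa [copyWeight_neg] using this hc.neg (by simp [signedDegree_neg, hbal])
      (by simpa [signedDegree_neg] using hx) (by rw [signedDegree_neg]; lia)
  by_contra! h
  obtain ⟨w, hw⟩ := F.exists_maximal_degree_vertex
  rw [hw] at hdeg h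
  obtain ⟨y, hy⟩ := exists_forall_ne_two_mul_degree_le F hF hdeg
  obtain ⟨l, hl⟩ := exists_degree_le_one F hF
  have hlarge (σ) (v) (hv : v ∈ ({w, y} : Finset V)ᶜ) :
      F.degree l + F.degree v < |copyWeight F c σ| := by
    have := hy v (by grind [mem_compl]) (by grind [mem_compl])
    have := h σ
    lia
  obtain ⟨σ, hσw, hσ⟩ := exists_apply_eq_and_mul_copyWeight_le F hbal hnonneg w
  obtain ⟨τ, hτ, hτweight⟩ := exists_mem_permsEqOff_neg_two_le_copyWeight F hc hF hdeg y σ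
    (hσw ▸ hnonneg)
  have hτpos : 0 < copyWeight F c τ := by have := h τ; grind
  have hσpos : 0 < copyWeight F c σ := copyWeight_pos_of_mem_permsEqOff F hc hlarge
    (mem_permsEqOff.2 fun v hv ↦ (mem_permsEqOff.1 hτ v hv).symm) hτpos
  have hσlarge := h σ
  rw [abs_of_pos hσpos] at hσlarge
  rw [abs_of_nonneg hnonneg] at hx
  have hcard : (1 : ℤ) < Fintype.card V := by have := F.degree_lt_card_verts w; lia
  have hlt : (Fintype.card V - 1) * (F.degree w + 4 : ℤ) < F.degree w * (Fintype.card V - 1) := by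
    calc (Fintype.card V - 1) * (F.degree w + 4 : ℤ)
        < (Fintype.card V - 1) * (2 * copyWeight F c σ) := by gcongr
      _ ≤ F.degree w * (2 * signedDegree c x) := by linarith
      _ ≤ F.degree w * (Fintype.card V - 1) := by gcongr; lia
  linarith

end Copies

theorem almost_balanced_spanning_forest_extreme_degree_general {V : Type*} [Fintype V]
    [DecidableEq V] (F : SimpleGraph V) [DecidableRel F.Adj]
    (hF : #F.edgeFinset ≤ Fintype.card V - 1)
    (hdeg : (Fintype.card V : ℝ) / 2 ≤ F.maxDegree ∨ F.maxDegree ≤ 16) (c : Sym2 V → ℤ)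
    (hc : ∀ e ∈ (⊤ : SimpleGraph V).edgeFinset, c e = 1 ∨ c e = -1)
    (hbal : ∑ e ∈ (⊤ : SimpleGraph V).edgeFinset, c e = 0) :
    ∃ f : V ↪ V, |(∑ e ∈ F.edgeFinset, c (Sym2.map f e) : ℝ)| ≤ (F.maxDegree : ℝ) / 2 + 9 := by
  have hsum := sum_signedDegree_eq_zero hbal
  suffices ∃ σ, 2 * |copyWeight F c σ| ≤ F.maxDegree + 18 by
    obtain ⟨σ, hσ⟩ := this
    refine ⟨σ.toEmbedding, ?_⟩
    have hσ' : 2 * |(copyWeight F c σ : ℝ)| ≤ F.maxDegree + 18 := mod_cast hσ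
    push_cast [copyWeight] at hσ'
    simp only [coe_toEmbedding]
    linarith
  cases isEmpty_or_nonempty V
  · exact ⟨1, by simp [copyWeight, Finset.eq_empty_of_isEmpty]⟩
  have hF' : #F.edgeFinset < Fintype.card V := by have := Fintype.card_pos (α := V); lia
  obtain hdeg | hdeg := hdeg
  · have hdeg' : Fintype.card V ≤ 2 * F.maxDegree := by
      rw [← @Nat.cast_le ℝ]; push_cast; linarith
    obtain ⟨σ, hσ⟩ := exists_two_mul_abs_copyWeight_le F hc hsum hF' hdeg'
    exact ⟨σ, by lia⟩
  · obtain ⟨σ, hσ⟩ := exists_abs_copyWeight_le F hc hsum hF'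
    exact ⟨σ, by lia⟩

/-- If `c` is a balanced `±1`-colouring of the edges of `K_n` and `F`
is a forest on `n` vertices with maximum degree `Δ` satisfying `Δ ≥ n/2` or `Δ ≤ 15`,
then there is a copy `F'` of `F` in `K_n` with `|c(F')| ≤ Δ/2 + 9`. -/
theorem almost_balanced_spanning_forest_extreme_degree
    (n : ℕ) (F : SimpleGraph (Fin n)) [DecidableRel F.Adj]
    (hF : F.IsAcyclic) (Δ : ℕ) (hΔ : F.maxDegree = Δ)
    (hdeg : (n : ℝ) / 2 ≤ (Δ : ℝ) ∨ Δ ≤ 15)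
    (c : Sym2 (Fin n) → ℤ)
    (hc : ∀ e ∈ (⊤ : SimpleGraph (Fin n)).edgeFinset, c e = 1 ∨ c e = -1)
    (hbal : ∑ e ∈ (⊤ : SimpleGraph (Fin n)).edgeFinset, c e = 0) :
    ∃ f : Fin n ↪ Fin n,
      |(∑ e ∈ F.edgeFinset, c (Sym2.map (⇑f) e) : ℝ)| ≤ (Δ : ℝ) / 2 + 9 := by
  subst hΔ
  exact almost_balanced_spanning_forest_extreme_degree_general F
    (card_edgeFinset_le_card_sub_one_of_isAcyclic F hF)
    (by simpa using hdeg.imp_right fun h ↦ h.trans (by norm_num)) c hc hbal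
end
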